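/- Let p > q and θ ∈ (0, π/2). If h is a positive convex solution of det(∇²h + hσ) = f·h^{p-1}(h² + |∇h|²)^{(n+1-q)/2} in C_θ with ∇_μ h = cot θ · h on ∂C_θ, where f > 0 is smooth on C_θ, then max_{C_θ} |∇²h| ≤ C, where the positive constant C depends only on n, p, q, min_{C_θ} f, min_{C_θ} h, ‖f‖_{C²(C_θ)} and ‖h‖_{C⁰(C_θ)}. -/

import Mathlib

/- Formalization of statements from "The L_p dual Minkowski problem for capillary
hypersurfaces".

We work in the ambient space `ℝ^{n+1}`.  The spherical cap `C_θ` is the part of the unit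
sphere centred at `cos θ • e` (where `e = -E_{n+1}`) lying in the closed upper half-space.
Functions on `C_θ` are represented by ambient functions `h : Euc n → ℝ`; the intrinsic
(round-metric) gradient `∇h` and Hessian `∇²h` of the restriction of `h` to `C_θ` are
expressed through ambient derivatives (for tangential arguments these expressions depend
only on the restriction of `h` to the cap).  The quantity `det(∇²h + hσ)` is encoded as the
determinant of the endomorphism of `ℝ^{n+1}` acting as `∇²h + hσ` on the tangent space of
the cap and as the identity on the normal line. -/

open Real Set
open scoped RealInnerProductSpace

noncomputable section

/-- Ambient Euclidean space `ℝ^{n+1}`. -/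
abbrev Euc (n : ℕ) : Type := EuclideanSpace ℝ (Fin (n + 1))

/-- The unit vector `e = -E_{n+1}`. -/
def eVec (n : ℕ) : Euc n := -(EuclideanSpace.single (Fin.last n) (1 : ℝ))

/-- `ν(ξ) = ξ - cos θ • e`, the unit normal (at `ξ`) of the sphere containing the cap `C_θ`. -/
def sphNormal (n : ℕ) (θ : ℝ) (ξ : Euc n) : Euc n := ξ - Real.cos θ • eVec n

/-- The spherical cap `C_θ = {ξ ∈ closure ℝ^{n+1}_+ : |ξ - cos θ • e| = 1}`. -/
def cap (n : ℕ) (θ : ℝ) : Set (Euc n) :=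
  {ξ | 0 ≤ ξ (Fin.last n) ∧ ‖sphNormal n θ ξ‖ = 1}

/-- The boundary `∂C_θ`. -/
def capBdry (n : ℕ) (θ : ℝ) : Set (Euc n) :=
  {ξ | ξ (Fin.last n) = 0 ∧ ‖sphNormal n θ ξ‖ = 1}

/-- The outward unit conormal `μ` of `∂C_θ` in `C_θ` (at boundary points). -/
def conormal (n : ℕ) (θ : ℝ) (ξ : Euc n) : Euc n :=
  Real.cot θ • ξ + Real.sin θ • eVec n

/-- Orthogonal projection of `ℝ^{n+1}` onto the tangent space of the cap at `ξ`. -/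
def tproj (n : ℕ) (θ : ℝ) (ξ : Euc n) : Euc n →L[ℝ] Euc n :=
  ContinuousLinearMap.id ℝ (Euc n) - (innerSL ℝ (sphNormal n θ ξ)).smulRight (sphNormal n θ ξ)

/-- `X` is tangent to the cap at `ξ`. -/
def IsTangent (n : ℕ) (θ : ℝ) (ξ X : Euc n) : Prop :=
  ⟪X, sphNormal n θ ξ⟫ = 0

/-- Intrinsic (round-metric) gradient `∇h` of `h` on the cap. -/
def sgrad (n : ℕ) (θ : ℝ) (h : Euc n → ℝ) (ξ : Euc n) : Euc n :=
  tproj n θ ξ (gradient h ξ)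

/-- Intrinsic (round-metric) Hessian `∇²h(X,Y)` of `h` on the cap (tangential arguments). -/
def shess (n : ℕ) (θ : ℝ) (h : Euc n → ℝ) (ξ X Y : Euc n) : ℝ :=
  ⟪(fderiv ℝ (gradient h) ξ) X, Y⟫ - ⟪gradient h ξ, sphNormal n θ ξ⟫ * ⟪X, Y⟫

/-- Endomorphism representing the intrinsic Hessian `∇²h` on tangent vectors
(and vanishing on the normal line). -/
def thessOp (n : ℕ) (θ : ℝ) (h : Euc n → ℝ) (ξ : Euc n) : Euc n →L[ℝ] Euc n :=
  ((tproj n θ ξ).comp ((fderiv ℝ (gradient h) ξ).comp (tproj n θ ξ)))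
    - ⟪gradient h ξ, sphNormal n θ ξ⟫ • tproj n θ ξ

/-- Rank-one projection onto the normal direction at `ξ`. -/
def normalPart (n : ℕ) (θ : ℝ) (ξ : Euc n) : Euc n →L[ℝ] Euc n :=
  (innerSL ℝ (sphNormal n θ ξ)).smulRight (sphNormal n θ ξ)

/-- Endomorphism acting as `∇²h + hσ` on the tangent space and as the identity on the
normal line. -/
def hessOp (n : ℕ) (θ : ℝ) (h : Euc n → ℝ) (ξ : Euc n) : Euc n →L[ℝ] Euc n :=
  thessOp n θ h ξ + h ξ • tproj n θ ξ + normalPart n θ ξ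

/-- `det(∇²h + hσ)` at `ξ`. -/
def sdet (n : ℕ) (θ : ℝ) (h : Euc n → ℝ) (ξ : Euc n) : ℝ :=
  LinearMap.det (hessOp n θ h ξ).toLinearMap

/-- `h > 0` on the cap. -/
def PosOnCap (n : ℕ) (θ : ℝ) (h : Euc n → ℝ) : Prop := ∀ ξ ∈ cap n θ, 0 < h ξ

/-- Convexity of a solution: `∇²h + hσ > 0` on the cap. -/
def IsConvexSol (n : ℕ) (θ : ℝ) (h : Euc n → ℝ) : Prop :=
  ∀ ξ ∈ cap n θ, ∀ X : Euc n, IsTangent n θ ξ X → X ≠ 0 →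
    0 < shess n θ h ξ X X + h ξ * ⟪X, X⟫

/-- The right-hand side `f·h^{p-1}·(h² + |∇h|²)^{(n+1-q)/2}`. -/
def eqRHS (n : ℕ) (θ p q : ℝ) (f h : Euc n → ℝ) (ξ : Euc n) : ℝ :=
  f ξ * h ξ ^ (p - 1) * (h ξ ^ 2 + ‖sgrad n θ h ξ‖ ^ 2) ^ (((n : ℝ) + 1 - q) / 2)

/-- `h` solves `det(∇²h + hσ) = f·h^{p-1}(h² + |∇h|²)^{(n+1-q)/2}` in `C_θ`. -/
def SolvesEq (n : ℕ) (θ p q : ℝ) (f h : Euc n → ℝ) : Prop :=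
  ∀ ξ ∈ cap n θ, sdet n θ h ξ = eqRHS n θ p q f h ξ

/-- Robin boundary condition `∇_μ h = cot θ · h` on `∂C_θ`. -/
def RobinBC (n : ℕ) (θ : ℝ) (h : Euc n → ℝ) : Prop :=
  ∀ ξ ∈ capBdry n θ, ⟪sgrad n θ h ξ, conormal n θ ξ⟫ = Real.cot θ * h ξ

/-- `l(ξ) = sin²θ + cos θ·⟨ξ, e⟩`. -/
def lFun (n : ℕ) (θ : ℝ) (ξ : Euc n) : ℝ :=
  Real.sin θ ^ 2 + Real.cos θ * ⟪ξ, eVec n⟫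

/-- `‖f‖_{C⁰(C_θ)} ≤ K`. -/
def CZeroNormLe (n : ℕ) (θ : ℝ) (f : Euc n → ℝ) (K : ℝ) : Prop :=
  ∀ ξ ∈ cap n θ, |f ξ| ≤ K

/-- `‖f‖_{C¹(C_θ)} ≤ K`. -/
def COneNormLe (n : ℕ) (θ : ℝ) (f : Euc n → ℝ) (K : ℝ) : Prop :=
  CZeroNormLe n θ f K ∧ ∀ ξ ∈ cap n θ, ‖sgrad n θ f ξ‖ ≤ K

/-- `‖f‖_{C²(C_θ)} ≤ K`. -/
def CTwoNormLe (n : ℕ) (θ : ℝ) (f : Euc n → ℝ) (K : ℝ) : Prop :=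
  COneNormLe n θ f K ∧
    ∀ ξ ∈ cap n θ, ∀ X Y : Euc n, IsTangent n θ ξ X → IsTangent n θ ξ Y →
      |shess n θ f ξ X Y| ≤ K * ‖X‖ * ‖Y‖

/-- The linearized operator `L_h(γ)` of the equation `𝒢(∇²h,h) = 𝒥₁(∇h,h)` at `h`:
the derivative at `ε = 0` of `𝒢 - 𝒥₁` along the variation `h_ε = h·e^{εγ}`
(cf. equation (5.4) of the paper, which is exactly this derivative). -/
def linOp (n : ℕ) (θ p q : ℝ) (f h γ : Euc n → ℝ) (ξ : Euc n) : ℝ :=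
  deriv (fun ε : ℝ =>
    sdet n θ (fun x => h x * Real.exp (ε * γ x)) ξ
      - eqRHS n θ p q f (fun x => h x * Real.exp (ε * γ x)) ξ) 0

/-- Endomorphism acting as `l·∇²u + cos θ·(∇u ⊗ e^T + e^T ⊗ ∇u) + uσ` on the tangent space
and as the identity on the normal line. -/
def capillaryOp (n : ℕ) (θ : ℝ) (u : Euc n → ℝ) (ξ : Euc n) : Euc n →L[ℝ] Euc n :=
  lFun n θ ξ • thessOp n θ u ξ
    + Real.cos θ • ((innerSL ℝ (sgrad n θ u ξ)).smulRight (tproj n θ ξ (eVec n))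
        + (innerSL ℝ (tproj n θ ξ (eVec n))).smulRight (sgrad n θ u ξ))
    + u ξ • tproj n θ ξ + normalPart n θ ξ

/-- Endomorphism acting as `∇²v + ∇v ⊗ ∇v + σ` on the tangent space and as the identity on
the normal line. -/
def logOp (n : ℕ) (θ : ℝ) (v : Euc n → ℝ) (ξ : Euc n) : Euc n →L[ℝ] Euc n :=
  thessOp n θ v ξ + (innerSL ℝ (sgrad n θ v ξ)).smulRight (sgrad n θ v ξ)
    + tproj n θ ξ + normalPart n θ ξ

/-- Geodesic distance on `C_θ` from `ξ` to the top point `N = (0,…,0,1-cos θ)`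
(for `θ ∈ (0,π/2)` the cap is geodesically convex, so this is `arccos ⟨ν(ξ), ν(N)⟩`). -/
def distToTop (n : ℕ) (θ : ℝ) (ξ : Euc n) : ℝ :=
  Real.arccos (ξ (Fin.last n) + Real.cos θ)

/-- The function `d := d_N²/(2θ)`. -/
def dCap (n : ℕ) (θ : ℝ) (ξ : Euc n) : ℝ := distToTop n θ ξ ^ 2 / (2 * θ)

/-! Project the cap centrally from the centre of its sphere onto the affine hyperplane
`⟪Z, e⟫ = -1`. The one-homogeneous extension of `h` restricts there to a convex function `v` on the
Euclidean ball of radius `R = tan θ` which solves the Monge–Ampère equation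
`log det D²v = log F + (p - 1) log v + β log ρ`, with `ρ = |∇v|² + (⟨y, ∇v⟩ - v)²`, and the
capillary condition becomes the Robin condition `⟨y, ∇v⟩ = v` on the sphere `|y| = R`. Up to a
conformal factor `D²v` is `∇²h + hσ`, so it suffices to bound `D²v`. Convexity and the Robin
condition turn the `C⁰` bound of `v` into a gradient bound.

For the Hessian bound, maximise `log v_ee + B K - a log v` over points and unit directions, where
`K = |∇v|²/2 - R⁻² v ⟨y, ∇v⟩`. At an interior maximum, differentiate the equation twice and use the
concavity of `log det`: the term `- a log v` absorbs the quantities `v_i² / v_ii` produced by `K`,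
and for large `B` the trace of `D²v` produced by `B K` dominates, which bounds `v_ee`. At a boundary
maximum the radial derivative of `K` is negative, which forces `e` to be radial. There the Robin
condition bounds the third derivatives `v_iie` from below by multiples of the eigenvalue gaps
`v_ee - v_ii`, so the radially differentiated equation bounds every `1 / v_ii`, and the determinant
then bounds `v_ee`. -/

open scoped Topology ContDiff

/-- `φ` has the two-jet `(a, b, c)` at `x`: the value there is `a`, the first derivative `b` and the
second derivative `c`, the first derivative existing near `x`. -/
def HasTwoJetAt (φ : ℝ → ℝ) (a b c x : ℝ) : Prop :=
  φ x = a ∧ ∃ φ' : ℝ → ℝ, (∀ᶠ s in 𝓝 x, HasDerivAt φ (φ' s) s) ∧ φ' x = b ∧ HasDerivAt φ' c x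

namespace HasTwoJetAt

variable {φ ψ : ℝ → ℝ} {a b c a' b' c' x : ℝ}

theorem congr_jet (h : HasTwoJetAt φ a b c x) (ha : a = a') (hb : b = b') (hc : c = c') :
    HasTwoJetAt φ a' b' c' x :=
  ha ▸ hb ▸ hc ▸ h

theorem eq (h : HasTwoJetAt φ a b c x) : φ x = a := h.1

theorem hasDerivAt (h : HasTwoJetAt φ a b c x) : HasDerivAt φ b x := by
  obtain ⟨-, φ', hφ', rfl, -⟩ := h
  exact hφ'.self_of_nhds

theorem unique (h : HasTwoJetAt φ a b c x) (h' : HasTwoJetAt ψ a' b' c' x) (he : φ =ᶠ[𝓝 x] ψ) :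
    a = a' ∧ b = b' ∧ c = c' := by
  obtain ⟨rfl, φ', hφ', rfl, hφ''⟩ := h
  obtain ⟨rfl, ψ', hψ', rfl, hψ''⟩ := h'
  have he' : φ' =ᶠ[𝓝 x] ψ' := by
    filter_upwards [hφ', hψ', he.eventually_nhds] with s hs hs' hes
    exact hs.unique (hs'.congr_of_eventuallyEq hes)
  exact ⟨he.eq_of_nhds, he'.eq_of_nhds, hφ''.unique (hψ''.congr_of_eventuallyEq he')⟩

theorem const (a x : ℝ) : HasTwoJetAt (fun _ => a) a 0 0 x :=
  ⟨rfl, fun _ => 0, .of_forall fun s => hasDerivAt_const s a, rfl, hasDerivAt_const x 0⟩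

theorem affine (a b x : ℝ) : HasTwoJetAt (fun s => a + s * b) (a + x * b) b 0 x :=
  ⟨rfl, fun _ => b, .of_forall fun s => by simpa using ((hasDerivAt_id s).mul_const b).const_add a,
    rfl, hasDerivAt_const x b⟩

theorem add (h : HasTwoJetAt φ a b c x) (h' : HasTwoJetAt ψ a' b' c' x) :
    HasTwoJetAt (fun s => φ s + ψ s) (a + a') (b + b') (c + c') x := by
  obtain ⟨rfl, φ', hφ', rfl, hφ''⟩ := h
  obtain ⟨rfl, ψ', hψ', rfl, hψ''⟩ := h'
  refine ⟨rfl, fun s => φ' s + ψ' s, ?_, rfl, hφ''.add hψ''⟩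
  filter_upwards [hφ', hψ'] with s hs hs' using hs.add hs'

theorem mul (h : HasTwoJetAt φ a b c x) (h' : HasTwoJetAt ψ a' b' c' x) :
    HasTwoJetAt (fun s => φ s * ψ s) (a * a') (b * a' + a * b')
      (c * a' + 2 * (b * b') + a * c') x := by
  have hφ := h.hasDerivAt
  have hψ := h'.hasDerivAt
  obtain ⟨rfl, φ', hφ', rfl, hφ''⟩ := h
  obtain ⟨rfl, ψ', hψ', rfl, hψ''⟩ := h'
  refine ⟨rfl, fun s => φ' s * ψ s + φ s * ψ' s, ?_, rfl,
    ((hφ''.mul hψ).add (hφ.mul hψ'')).congr_deriv (by ring)⟩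
  filter_upwards [hφ', hψ'] with s hs hs' using hs.mul hs'

theorem const_mul (r : ℝ) (h : HasTwoJetAt φ a b c x) :
    HasTwoJetAt (fun s => r * φ s) (r * a) (r * b) (r * c) x :=
  ((const r x).mul h).congr_jet rfl (by ring) (by ring)

theorem sub (h : HasTwoJetAt φ a b c x) (h' : HasTwoJetAt ψ a' b' c' x) :
    HasTwoJetAt (fun s => φ s - ψ s) (a - a') (b - b') (c - c') x := by
  simpa only [neg_one_mul, ← sub_eq_add_neg] using h.add (h'.const_mul (-1))

theorem sum {ι : Type*} (S : Finset ι) {φ : ι → ℝ → ℝ} {a b c : ι → ℝ}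
    (h : ∀ i ∈ S, HasTwoJetAt (φ i) (a i) (b i) (c i) x) :
    HasTwoJetAt (fun s => ∑ i ∈ S, φ i s) (∑ i ∈ S, a i) (∑ i ∈ S, b i) (∑ i ∈ S, c i) x := by
  classical
  induction S using Finset.induction_on with
  | empty => simpa using const 0 x
  | insert i S hi ih =>
    simp only [Finset.sum_insert hi]
    exact (h i (S.mem_insert_self i)).add (ih fun j hj => h j (Finset.mem_insert_of_mem hj))

theorem log (h : HasTwoJetAt φ a b c x) (ha : a ≠ 0) :
    HasTwoJetAt (fun s => Real.log (φ s)) (Real.log a) (b / a) (c / a - b ^ 2 / a ^ 2) x := by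
  have hφ := h.hasDerivAt
  obtain ⟨rfl, φ', hφ', rfl, hφ''⟩ := h
  refine ⟨rfl, fun s => φ' s / φ s, ?_, rfl, (hφ''.div hφ ha).congr_deriv (by field_simp)⟩
  filter_upwards [hφ', hφ.continuousAt.eventually_ne ha] with s hs hs' using hs.log hs'

theorem deriv_eq_zero_of_isLocalMax (h : HasTwoJetAt φ a b c x) (hm : IsLocalMax φ x) : b = 0 :=
  hm.hasDerivAt_eq_zero h.hasDerivAt

theorem deriv_deriv_nonpos_of_isLocalMax (h : HasTwoJetAt φ a b c x) (hm : IsLocalMax φ x) :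
    c ≤ 0 := by
  have hb := h.deriv_eq_zero_of_isLocalMax hm
  have hderiv := h.hasDerivAt.deriv
  have hcont := h.hasDerivAt.continuousAt
  obtain ⟨-, φ', hφ', -, hφ''⟩ := h
  have hderiv2 : deriv (deriv φ) x = c := by
    rw [Filter.EventuallyEq.deriv_eq (hφ'.mono fun s hs => hs.deriv), hφ''.deriv]
  by_contra! hc
  have hmin := isLocalMin_of_deriv_deriv_pos (hderiv2 ▸ hc) (hderiv.trans hb) hcont
  have hconst : φ =ᶠ[𝓝 x] fun _ => φ x := by
    filter_upwards [hm, hmin] with s hs hs' using le_antisymm hs hs'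
  rw [← hderiv2, hconst.deriv.deriv_eq] at hc
  simp at hc

end HasTwoJetAt

section MatrixCalculus

variable {ι : Type*} [Fintype ι] [DecidableEq ι] {M : ℝ → Matrix ι ι ℝ} {M' A T Q : Matrix ι ι ℝ}
  {x : ℝ}

theorem matrix_trace_adjugate_mul_eq_sum_det_updateCol (A B : Matrix ι ι ℝ) :
    (A.adjugate * B).trace = ∑ i, (A.updateCol i fun k => B k i).det := by
  refine Finset.sum_congr rfl fun i _ => ?_
  rw [← Matrix.cramer_apply, Matrix.cramer_eq_adjugate_mulVec]
  rfl

theorem hasDerivAt_matrix_det (h : ∀ i j, HasDerivAt (fun s => M s i j) (M' i j) x) :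
    HasDerivAt (fun s => (M s).det) ((M x).adjugate * M').trace x := by
  simp only [matrix_trace_adjugate_mul_eq_sum_det_updateCol, Matrix.det_apply']
  refine (HasDerivAt.fun_sum fun σ _ =>
    (HasDerivAt.fun_finsetProd fun i _ => h (σ i) i).const_mul _).congr_deriv ?_
  rw [Finset.sum_comm]
  refine Finset.sum_congr rfl fun σ _ => ?_
  rw [Finset.mul_sum]
  refine Finset.sum_congr rfl fun i _ => ?_
  rw [← Finset.mul_prod_erase Finset.univ _ (Finset.mem_univ i), Matrix.updateCol_self, smul_eq_mul,
    mul_comm (∏ j ∈ _, _)]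
  congr 2
  exact Finset.prod_congr rfl fun j hj =>
    (Matrix.updateCol_ne (Finset.ne_of_mem_erase hj)).symm

attribute [local instance] Matrix.linftyOpNormedRing Matrix.linftyOpNormedAlgebra in
theorem hasDerivAt_matrix_inv (h : ∀ i j, HasDerivAt (fun s => M s i j) (M' i j) x)
    (hM : IsUnit (M x)) (i j : ι) :
    HasDerivAt (fun s => (M s)⁻¹ i j) (-((M x)⁻¹ * M' * (M x)⁻¹) i j) x := by
  have hMx : HasDerivAt M M' x := by
    have := HasDerivAt.fun_sum fun i (_ : i ∈ Finset.univ) =>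
      HasDerivAt.fun_sum fun j (_ : j ∈ Finset.univ) =>
        (h i j).smul_const (Matrix.single i j (1 : ℝ))
    simp only [Matrix.smul_single, smul_eq_mul, mul_one, ← Matrix.matrix_eq_sum_single] at this
    exact this
  let entry : Matrix ι ι ℝ →L[ℝ] ℝ := (Matrix.entryLinearMap ℝ ℝ i j).toContinuousLinearMap
  obtain ⟨u, hu⟩ := hM
  have hu_inv : (↑u⁻¹ : Matrix ι ι ℝ) = (M x)⁻¹ := hu ▸ Matrix.coe_units_inv u
  have hinv := hasFDerivAt_ringInverse (𝕜 := ℝ) u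
  rw [hu] at hinv
  have := entry.hasFDerivAt.comp_hasDerivAt x (hinv.comp_hasDerivAt x hMx)
  simp only [Function.comp_def, ← Matrix.nonsing_inv_eq_ringInverse, hu_inv, neg_apply,
    ContinuousLinearMap.mulLeftRight_apply] at this
  exact this

theorem hasTwoJetAt_log_det (h : ∀ i j, HasTwoJetAt (fun s => M s i j) (A i j) (T i j) (Q i j) x)
    (hA : A.det ≠ 0) :
    HasTwoJetAt (fun s => Real.log (M s).det) (Real.log A.det) (A⁻¹ * T).trace
      ((A⁻¹ * Q).trace - (A⁻¹ * T * A⁻¹ * T).trace) x := by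
  have hMx : M x = A := Matrix.ext fun i j => (h i j).eq
  have hM1 : ∀ i j, HasDerivAt (fun s => M s i j) (T i j) x := fun i j => (h i j).hasDerivAt
  choose _ M' hM' hM'T hM'' using h
  have hM'T : Matrix.of (fun i j => M' i j x) = T := Matrix.ext hM'T
  have hdet : ∀ᶠ s in 𝓝 x, (M s).det ≠ 0 :=
    (hasDerivAt_matrix_det hM1).continuousAt.eventually_ne (by rwa [hMx])
  have hunit : IsUnit (M x) := (Matrix.isUnit_iff_isUnit_det _).2 (by rw [hMx]; exact hA.isUnit)
  refine ⟨by simp only [hMx], fun s => ((M s)⁻¹ * Matrix.of fun i j => M' i j s).trace, ?_,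
    by simp only [hMx, hM'T], ?_⟩
  · filter_upwards [hdet, Filter.eventually_all.2 fun i => Filter.eventually_all.2 (hM' i)]
      with s hs hs'
    refine ((hasDerivAt_matrix_det (M' := .of fun i j => M' i j s) hs').log hs).congr_deriv ?_
    rw [Matrix.inv_def, Matrix.smul_mul, Matrix.trace_smul, Ring.inverse_eq_inv', smul_eq_mul,
      div_eq_inv_mul]
  · simp only [Matrix.trace, Matrix.diag_apply, Matrix.mul_apply, Matrix.of_apply]
    refine (HasDerivAt.fun_sum fun i _ => HasDerivAt.fun_sum fun j _ =>
      (hasDerivAt_matrix_inv hM1 hunit i j).mul (hM'' j i)).congr_deriv ?_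
    simp only [hMx, ← hM'T, Finset.sum_add_distrib, neg_mul, Finset.sum_neg_distrib]
    rw [neg_add_eq_sub]
    simp only [Matrix.mul_apply, Matrix.of_apply]

theorem hasTwoJetAt_log_det_of_diagonal {l : ι → ℝ} (hl : ∀ i, l i ≠ 0)
    (h : ∀ i j, HasTwoJetAt (fun s => M s i j) (Matrix.diagonal l i j) (T i j) (Q i j) x) :
    HasTwoJetAt (fun s => Real.log (M s).det) (∑ i, Real.log (l i)) (∑ i, T i i / l i)
      (∑ i, Q i i / l i - ∑ i, ∑ j, T i j * T j i / (l i * l j)) x := by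
  have hdet : (Matrix.diagonal l).det = ∏ i, l i := Matrix.det_diagonal
  have hinv : (Matrix.diagonal l)⁻¹ = Matrix.diagonal fun i => (l i)⁻¹ := by
    refine Matrix.inv_eq_right_inv ?_
    rw [Matrix.diagonal_mul_diagonal, ← Matrix.diagonal_one]
    simp only [mul_inv_cancel₀ (hl _)]
  refine (hasTwoJetAt_log_det h (hdet ▸ Finset.prod_ne_zero_iff.2 fun i _ => hl i)).congr_jet
    (by rw [hdet, Real.log_prod fun i _ => hl i]) ?_ ?_
  · simp only [hinv, Matrix.trace, Matrix.diag_apply, Matrix.diagonal_mul, inv_mul_eq_div]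
  · simp only [hinv, Matrix.trace, Matrix.diag_apply, Matrix.diagonal_mul, Matrix.mul_diagonal,
      Matrix.mul_apply (M := _ * Matrix.diagonal _), inv_mul_eq_div]
    congr 1
    refine Finset.sum_congr rfl fun i _ => Finset.sum_congr rfl fun j _ => ?_
    rw [← div_eq_mul_inv, div_div, div_mul_eq_mul_div]

end MatrixCalculus

section DirDeriv

variable {E : Type*} [NormedAddCommGroup E]

theorem exists_norm_le_of_continuous [ProperSpace E] {F : Type*} [SeminormedAddCommGroup F]
    {φ : E → F} (hφ : Continuous φ) (R : ℝ) : ∃ A, ∀ y, ‖y‖ ≤ R → ‖φ y‖ ≤ A := by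
  obtain ⟨A, hA⟩ := (isCompact_closedBall (0 : E) R).exists_bound_of_continuousOn hφ.continuousOn
  exact ⟨A, fun y hy => hA y (mem_closedBall_zero_iff.2 hy)⟩

section NormedSpace

variable [NormedSpace ℝ E] {f : E → ℝ}

/-- The derivative of `f` in the direction `e`, with the direction first so that it iterates:
`dirDeriv a (dirDeriv b f)` is the second derivative of `f` along `b` and then `a`. -/
def dirDeriv (e : E) (f : E → ℝ) (y : E) : ℝ := fderiv ℝ f y e

theorem contDiff_dirDeriv (hf : ContDiff ℝ ∞ f) (e : E) : ContDiff ℝ ∞ (dirDeriv e f) :=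
  (hf.fderiv_right le_rfl).clm_apply contDiff_const

theorem contDiff_dirDeriv_self (hf : ContDiff ℝ ∞ f) : ContDiff ℝ ∞ fun y => dirDeriv y f y :=
  (hf.fderiv_right le_rfl).clm_apply contDiff_id

theorem dirDeriv_smul (c : ℝ) (e : E) (f : E → ℝ) (y : E) :
    dirDeriv (c • e) f y = c * dirDeriv e f y :=
  (fderiv ℝ f y).map_smul c e

theorem dirDeriv_sub (a e : E) (f : E → ℝ) (y : E) :
    dirDeriv (a - e) f y = dirDeriv a f y - dirDeriv e f y :=
  (fderiv ℝ f y).map_sub a e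

theorem dirDeriv_dirDeriv (hf : ContDiff ℝ 2 f) (a e y : E) :
    dirDeriv a (dirDeriv e f) y = fderiv ℝ (fderiv ℝ f) y a e := by
  have hdiff : DifferentiableAt ℝ (fderiv ℝ f) y :=
    (hf.fderiv_right (m := 1) le_rfl).differentiable one_ne_zero y
  unfold dirDeriv
  simp [fderiv_clm_apply hdiff (differentiableAt_const e)]

theorem dirDeriv_dirDeriv_smul (hf : ContDiff ℝ 2 f) (c : ℝ) (e y : E) :
    dirDeriv (c • e) (dirDeriv (c • e) f) y = c ^ 2 * dirDeriv e (dirDeriv e f) y := by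
  rw [dirDeriv_dirDeriv hf, dirDeriv_dirDeriv hf, map_smul, map_smul, smul_apply, smul_eq_mul,
    smul_eq_mul, sq, mul_assoc]

theorem dirDeriv_comm (hf : ContDiff ℝ 2 f) (a e : E) :
    dirDeriv a (dirDeriv e f) = dirDeriv e (dirDeriv a f) := by
  funext y
  rw [dirDeriv_dirDeriv hf, dirDeriv_dirDeriv hf]
  exact hf.contDiffAt.isSymmSndFDerivAt (by simp) a e

theorem hasDerivAt_comp_add_smul (hf : Differentiable ℝ f) (y e : E) (s : ℝ) :
    HasDerivAt (fun s : ℝ => f (y + s • e)) (dirDeriv e f (y + s • e)) s :=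
  (hf _).hasFDerivAt.comp_hasDerivAt s
    (by simpa using ((hasDerivAt_id s).smul_const e).const_add y)

theorem hasTwoJetAt_comp_add_smul (hf : ContDiff ℝ ∞ f) (y e : E) :
    HasTwoJetAt (fun s : ℝ => f (y + s • e)) (f y) (dirDeriv e f y)
      (dirDeriv e (dirDeriv e f) y) 0 :=
  ⟨by simp, fun s => dirDeriv e f (y + s • e),
    .of_forall (hasDerivAt_comp_add_smul (hf.differentiable (by simp)) y e), by simp, by
      simpa using
        hasDerivAt_comp_add_smul ((contDiff_dirDeriv hf e).differentiable (by simp)) y e 0⟩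

theorem add_dirDeriv_sub_le {s : Set E} (hs : Convex ℝ s) (hf : ContDiff ℝ ∞ f)
    (hconv : ∀ y ∈ s, ∀ e, 0 ≤ dirDeriv e (dirDeriv e f) y) {y z : E} (hy : y ∈ s) (hz : z ∈ s) :
    f y + dirDeriv (z - y) f y ≤ f z := by
  have hφ := hasDerivAt_comp_add_smul (hf.differentiable (by simp)) y (z - y)
  have hφ' := hasDerivAt_comp_add_smul
    ((contDiff_dirDeriv hf (z - y)).differentiable (by simp)) y (z - y)
  have hconvex : ConvexOn ℝ (Icc (0 : ℝ) 1) fun t => f (y + t • (z - y)) :=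
    convexOn_of_hasDerivWithinAt2_nonneg (convex_Icc 0 1)
      (fun t _ => (hφ t).continuousAt.continuousWithinAt) (fun t _ => (hφ t).hasDerivWithinAt)
      (fun t _ => (hφ' t).hasDerivWithinAt)
      fun t ht => hconv _ (hs.add_smul_sub_mem hy hz (interior_subset ht)) _
  have := hconvex.le_slope_of_hasDerivWithinAt (left_mem_Icc.2 zero_le_one)
    (right_mem_Icc.2 zero_le_one) zero_lt_one (hφ 0).hasDerivWithinAt
  simp only [slope_def_field, zero_smul, one_smul, add_zero, add_sub_cancel, sub_zero, div_one]
    at this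
  linarith

theorem dirDeriv_le_dirDeriv_add_smul {s : Set E} (hs : Convex ℝ s) (hf : ContDiff ℝ ∞ f)
    (hconv : ∀ y ∈ s, ∀ e, 0 ≤ dirDeriv e (dirDeriv e f) y) {y e : E} {t : ℝ} (ht : 0 ≤ t)
    (hy : y ∈ s) (hz : y + t • e ∈ s) : dirDeriv e f y ≤ dirDeriv e f (y + t • e) := by
  rcases ht.eq_or_lt with rfl | ht
  · simp
  have hright := add_dirDeriv_sub_le hs hf hconv hy hz
  have hleft := add_dirDeriv_sub_le hs hf hconv hz hy
  rw [add_sub_cancel_left, dirDeriv_smul] at hright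
  rw [sub_add_cancel_left, ← neg_smul, dirDeriv_smul] at hleft
  exact le_of_mul_le_mul_left (by linarith) ht

theorem exists_nonneg_norm_add_smul_eq {R : ℝ} {y e : E} (hy : ‖y‖ ≤ R) (he : ‖e‖ = 1) :
    ∃ t : ℝ, 0 ≤ t ∧ ‖y + t • e‖ = R := by
  have hR : 0 ≤ 2 * R := by linarith [norm_nonneg y]
  have hcont : ContinuousOn (fun t : ℝ => ‖y + t • e‖) (Icc 0 (2 * R)) := by fun_prop
  have hfar : R ≤ ‖y + (2 * R) • e‖ := by
    have := norm_sub_norm_le ((2 * R) • e) (-y)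
    rw [sub_neg_eq_add, norm_neg, norm_smul, he, mul_one, Real.norm_of_nonneg hR, add_comm] at this
    linarith
  obtain ⟨t, ht, h⟩ := intermediate_value_Icc hR hcont ⟨by simpa using hy, hfar⟩
  exact ⟨t, ht.1, h⟩

/-- Along a line in the direction `e` the derivative of a convex function increases up to the exit
point, where the tangent inequality towards `R • e` and the Robin condition bound it. -/
theorem dirDeriv_le_div_of_robin {R M : ℝ} (hR : 0 < R) (hf : ContDiff ℝ ∞ f)
    (hconv : ∀ y, ‖y‖ ≤ R → ∀ e, 0 ≤ dirDeriv e (dirDeriv e f) y)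
    (hrobin : ∀ y, ‖y‖ = R → dirDeriv y f y = f y) (hM : ∀ y, ‖y‖ ≤ R → f y ≤ M) {y e : E}
    (hy : ‖y‖ ≤ R) (he : ‖e‖ = 1) : dirDeriv e f y ≤ M / R := by
  have hball := convex_closedBall (0 : E) R
  simp only [← mem_closedBall_zero_iff (r := R)] at hconv
  have hsphere : ∀ z, ‖z‖ = R → dirDeriv e f z ≤ M / R := by
    intro z hz
    have hRe : ‖R • e‖ ≤ R := by rw [norm_smul, he, mul_one, Real.norm_of_nonneg hR.le]
    have h := add_dirDeriv_sub_le hball hf hconv (mem_closedBall_zero_iff.2 hz.le)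
      (mem_closedBall_zero_iff.2 hRe)
    rw [dirDeriv_sub, dirDeriv_smul, hrobin z hz, add_sub_cancel] at h
    exact (le_div_iff₀' hR).2 (h.trans (hM _ hRe))
  obtain ⟨t, ht, htR⟩ := exists_nonneg_norm_add_smul_eq hy he
  exact (dirDeriv_le_dirDeriv_add_smul hball hf hconv ht (mem_closedBall_zero_iff.2 hy)
    (mem_closedBall_zero_iff.2 htR.le)).trans (hsphere _ htR)

theorem norm_fderiv_le_div_of_robin {R M : ℝ} (hR : 0 < R) (hf : ContDiff ℝ ∞ f)
    (hconv : ∀ y, ‖y‖ ≤ R → ∀ e, 0 ≤ dirDeriv e (dirDeriv e f) y)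
    (hrobin : ∀ y, ‖y‖ = R → dirDeriv y f y = f y) (hM0 : 0 ≤ M) (hM : ∀ y, ‖y‖ ≤ R → f y ≤ M)
    {y : E} (hy : ‖y‖ ≤ R) : ‖fderiv ℝ f y‖ ≤ M / R := by
  have hle {e : E} (he : ‖e‖ = 1) := dirDeriv_le_div_of_robin hR hf hconv hrobin hM hy he
  refine ContinuousLinearMap.opNorm_le_of_unit_norm (by positivity) fun e he => ?_
  have hneg := hle (e := -e) (by rwa [norm_neg])
  rw [dirDeriv, map_neg] at hneg
  exact abs_le.2 ⟨neg_le.1 hneg, hle he⟩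

theorem abs_dirDeriv_dirDeriv_le {C : ℝ} (hC : 0 ≤ C) (hf : ContDiff ℝ 2 f) {y : E}
    (hpos : ∀ e, 0 ≤ dirDeriv e (dirDeriv e f) y)
    (hle : ∀ e, ‖e‖ = 1 → dirDeriv e (dirDeriv e f) y ≤ C) (a e : E) :
    |dirDeriv a (dirDeriv e f) y| ≤ C * ‖a‖ * ‖e‖ := by
  have hdiag : ∀ e, dirDeriv e (dirDeriv e f) y ≤ C * ‖e‖ ^ 2 := by
    intro e
    rcases eq_or_ne e 0 with rfl | he
    · simp [dirDeriv_dirDeriv hf]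
    · rw [← NormedSpace.norm_smul_normalize e, dirDeriv_dirDeriv_smul hf,
        NormedSpace.norm_smul_normalize, mul_comm]
      exact mul_le_mul_of_nonneg_right (hle _ (NormedSpace.norm_normalize he)) (sq_nonneg _)
  simp only [dirDeriv_dirDeriv hf] at hpos hdiag ⊢
  let H : LinearMap.BilinForm ℝ E := (fderiv ℝ (fderiv ℝ f) y).toBilinForm
  have hsymm : LinearMap.IsSymm H := ⟨hf.contDiffAt.isSymmSndFDerivAt (by simp)⟩
  refine abs_le_of_sq_le_sq ?_ (by positivity)
  calc H a e ^ 2 ≤ H a a * H e e := H.apply_sq_le_of_symm hpos hsymm a e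
    _ ≤ C * ‖a‖ ^ 2 * (C * ‖e‖ ^ 2) := mul_le_mul (hdiag a) (hdiag e) (hpos e) (by positivity)
    _ = (C * ‖a‖ * ‖e‖) ^ 2 := by ring

/-- `f` and its first and second derivatives in unit directions are bounded by `A` on the ball of
radius `R` about the origin. -/
structure CTwoBound (R A : ℝ) (f : E → ℝ) : Prop where
  norm_le : ∀ y, ‖y‖ ≤ R → ‖f y‖ ≤ A
  norm_dirDeriv_le : ∀ y, ‖y‖ ≤ R → ∀ e, ‖e‖ = 1 → ‖dirDeriv e f y‖ ≤ A
  norm_dirDeriv_dirDeriv_le : ∀ y, ‖y‖ ≤ R → ∀ e, ‖e‖ = 1 → ‖dirDeriv e (dirDeriv e f) y‖ ≤ A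

theorem CTwoBound.mono {R A A' : ℝ} (h : CTwoBound R A f) (hA : A ≤ A') : CTwoBound R A' f where
  norm_le y hy := (h.norm_le y hy).trans hA
  norm_dirDeriv_le y hy e he := (h.norm_dirDeriv_le y hy e he).trans hA
  norm_dirDeriv_dirDeriv_le y hy e he := (h.norm_dirDeriv_dirDeriv_le y hy e he).trans hA

theorem exists_cTwoBound [ProperSpace E] (hf : ContDiff ℝ 2 f) (R : ℝ) :
    ∃ A, CTwoBound R A f := by
  have hf' : ContDiff ℝ 1 (fderiv ℝ f) := hf.fderiv_right le_rfl
  obtain ⟨A₀, h₀⟩ := exists_norm_le_of_continuous hf.continuous R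
  obtain ⟨A₁, h₁⟩ := exists_norm_le_of_continuous hf'.continuous R
  obtain ⟨A₂, h₂⟩ := exists_norm_le_of_continuous (hf'.continuous_fderiv one_ne_zero) R
  refine ⟨max A₀ (max A₁ A₂), fun y hy => le_max_of_le_left (h₀ y hy),
    fun y hy e he => le_max_of_le_right (le_max_of_le_left ?_),
    fun y hy e he => le_max_of_le_right (le_max_of_le_right ?_)⟩
  · exact ((fderiv ℝ f y).unit_le_opNorm e he.le).trans (h₁ y hy)
  · rw [dirDeriv_dirDeriv hf]
    simpa [he] using ((fderiv ℝ (fderiv ℝ f) y).le_of_opNorm₂_le_of_le (h₂ y hy) he.le he.le)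

theorem CTwoBound.mul {g : E → ℝ} {R A B : ℝ} (hfA : CTwoBound R A f) (hgB : CTwoBound R B g)
    (hf : ContDiff ℝ ∞ f) (hg : ContDiff ℝ ∞ g) :
    CTwoBound R (4 * (A * B)) fun y => f y * g y := by
  have hjet (y e : E) := (hasTwoJetAt_comp_add_smul (hf.mul hg) y e).unique
    ((hasTwoJetAt_comp_add_smul hf y e).mul (hasTwoJetAt_comp_add_smul hg y e)) .rfl
  have h₀ {y : E} (hy : ‖y‖ ≤ R) := norm_mul_le_of_le (hfA.norm_le y hy) (hgB.norm_le y hy)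
  have hAB {y : E} (hy : ‖y‖ ≤ R) : 0 ≤ A * B := (norm_nonneg _).trans (h₀ hy)
  refine ⟨fun y hy => by linarith [h₀ hy, hAB hy], fun y hy e he => ?_, fun y hy e he => ?_⟩
  · have hD := norm_add_le_of_le
      (norm_mul_le_of_le (hfA.norm_dirDeriv_le y hy e he) (hgB.norm_le y hy))
      (norm_mul_le_of_le (hfA.norm_le y hy) (hgB.norm_dirDeriv_le y hy e he))
    rw [(hjet y e).2.1]
    linarith [hAB hy]
  · have hDD := norm_add_le_of_le (norm_add_le_of_le
      (norm_mul_le_of_le (hfA.norm_dirDeriv_dirDeriv_le y hy e he) (hgB.norm_le y hy))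
      (norm_mul_le_of_le (Real.norm_of_nonneg (r := 2) zero_le_two).le
        (norm_mul_le_of_le (hfA.norm_dirDeriv_le y hy e he) (hgB.norm_dirDeriv_le y hy e he))))
      (norm_mul_le_of_le (hfA.norm_le y hy) (hgB.norm_dirDeriv_dirDeriv_le y hy e he))
    rw [(hjet y e).2.2]
    linarith

end NormedSpace

section InnerProductSpace

variable [InnerProductSpace ℝ E] {ι : Type*} [Fintype ι]

theorem dirDeriv_eq_sum (b : OrthonormalBasis ι ℝ E) (a : E) (f : E → ℝ) (y : E) :
    dirDeriv a f y = ∑ k, ⟪b k, a⟫ * dirDeriv (b k) f y := by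
  unfold dirDeriv
  conv_lhs => rw [← b.sum_repr a]
  simp only [map_sum, map_smul, b.repr_apply_apply, smul_eq_mul]

theorem norm_fderiv_sq_eq_sum (b : OrthonormalBasis ι ℝ E) (f : E → ℝ) (y : E) :
    ‖fderiv ℝ f y‖ ^ 2 = ∑ k, dirDeriv (b k) f y ^ 2 := by
  have : FiniteDimensional ℝ E := b.toBasis.finiteDimensional_of_finite
  rw [← (InnerProductSpace.toDual ℝ E).symm.norm_map, ← b.sum_sq_norm_inner_left]
  simp only [InnerProductSpace.toDual_symm_apply, Real.norm_eq_abs, sq_abs, dirDeriv]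

/-- The orthonormal basis `b` diagonalizes the Hessian of `f` at `y`, with eigenvalues `l`. -/
def IsHessianEigenbasis (b : OrthonormalBasis ι ℝ E) (l : ι → ℝ) (f : E → ℝ) (y : E) : Prop :=
  ∀ i a, dirDeriv a (dirDeriv (b i) f) y = l i * ⟪b i, a⟫

theorem IsHessianEigenbasis.dirDeriv_dirDeriv [DecidableEq ι] {b : OrthonormalBasis ι ℝ E}
    {l : ι → ℝ} {f : E → ℝ} {y : E} (h : IsHessianEigenbasis b l f y) (i j : ι) :
    dirDeriv (b i) (dirDeriv (b j) f) y = if j = i then l j else 0 := by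
  rw [h, b.inner_eq_ite, mul_ite, mul_one, mul_zero]

theorem IsHessianEigenbasis.dirDeriv_dirDeriv_self {b : OrthonormalBasis ι ℝ E} {l : ι → ℝ}
    {f : E → ℝ} {y : E} (h : IsHessianEigenbasis b l f y) (i : ι) :
    dirDeriv (b i) (dirDeriv (b i) f) y = l i := by
  classical simp [h.dirDeriv_dirDeriv]

theorem exists_isHessianEigenbasis [FiniteDimensional ℝ E] {n : ℕ} (hn : Module.finrank ℝ E = n)
    {f : E → ℝ} (hf : ContDiff ℝ 2 f) (y : E) :
    ∃ (b : OrthonormalBasis (Fin n) ℝ E) (l : Fin n → ℝ), IsHessianEigenbasis b l f y := by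
  let A : E →ₗ[ℝ] E := (InnerProductSpace.toDual ℝ E).symm.toLinearEquiv.toLinearMap ∘ₗ
    (fderiv ℝ (fderiv ℝ f) y).toLinearMap
  have hA : ∀ a c, ⟪A a, c⟫ = dirDeriv a (dirDeriv c f) y := fun a c => by
    simp [A, dirDeriv_dirDeriv hf]
  have hsymm : A.IsSymmetric := fun a c => by
    rw [hA, real_inner_comm, hA, dirDeriv_comm hf]
  refine ⟨hsymm.eigenvectorBasis hn, hsymm.eigenvalues hn, fun i a => ?_⟩
  rw [dirDeriv_comm hf, ← hA, hsymm.apply_eigenvectorBasis]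
  simp [inner_smul_left]

end InnerProductSpace

end DirDeriv

section TestQuantities

variable {E : Type*} [NormedAddCommGroup E] [InnerProductSpace ℝ E]

/-- The squared norm of the gradient of `v`. -/
def gradSq (v : E → ℝ) (y : E) : ℝ := ‖fderiv ℝ v y‖ ^ 2

/-- The value `⟨y, ∇v⟩ - v` at `∇v(y)` of the Legendre transform of `v`. -/
def legendre (v : E → ℝ) (y : E) : ℝ := dirDeriv y v y - v y

/-- When `v` is the support function of a hypersurface restricted to an affine hyperplane at
distance one from the origin, this is the squared length `ρ` of its position vector. -/
def positionSq (v : E → ℝ) (y : E) : ℝ := gradSq v y + legendre v y ^ 2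

/-- The term `K` of the test function. Under the Robin condition `⟨y, ∇v⟩ = v` on `‖y‖ = R` its
radial derivative there is `-2 v² / R²`, which excludes tangential maxima on the boundary. -/
def corrector (R : ℝ) (v : E → ℝ) (y : E) : ℝ :=
  1 / 2 * gradSq v y - 1 / R ^ 2 * (v y * dirDeriv y v y)

/-- The vector `Z = ∇v + (⟨y, ∇v⟩ - v) y` paired with `e`, for which `∇ρ = 2 D²v Z`. -/
def positionGrad (v : E → ℝ) (y e : E) : ℝ := dirDeriv e v y + legendre v y * ⟪e, y⟫

/-- The vector `ζ = ∇v - (v / R²) y` paired with `e`: the part of `∇K` containing `D²v` is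
`D²v ζ`. -/
def correctorGrad (R : ℝ) (v : E → ℝ) (y e : E) : ℝ := dirDeriv e v y - v y / R ^ 2 * ⟪e, y⟫

variable {ι : Type*} [Fintype ι] (b : OrthonormalBasis ι ℝ E) {l : ι → ℝ} {v : E → ℝ} {y : E}

/-- The third derivatives of `v` at `y` in the basis `b`. -/
def thirdDeriv (b : OrthonormalBasis ι ℝ E) (v : E → ℝ) (y : E) (i j k : ι) : ℝ :=
  dirDeriv (b i) (dirDeriv (b j) (dirDeriv (b k) v)) y

/-- The fourth derivatives of `v` at `y` along `b i, b i, b j, b j`. -/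
def fourthDeriv (b : OrthonormalBasis ι ℝ E) (v : E → ℝ) (y : E) (i j : ι) : ℝ :=
  dirDeriv (b i) (dirDeriv (b i) (dirDeriv (b j) (dirDeriv (b j) v))) y

theorem thirdDeriv_swap_left (hv : ContDiff ℝ ∞ v) (i j k : ι) :
    thirdDeriv b v y i j k = thirdDeriv b v y j i k := by
  unfold thirdDeriv
  rw [dirDeriv_comm (contDiff_infty.1 (contDiff_dirDeriv hv _) 2)]

theorem thirdDeriv_swap_right (hv : ContDiff ℝ ∞ v) (i j k : ι) :
    thirdDeriv b v y i j k = thirdDeriv b v y i k j := by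
  unfold thirdDeriv
  rw [dirDeriv_comm (contDiff_infty.1 hv 2) (b j) (b k)]

theorem fourthDeriv_comm (hv : ContDiff ℝ ∞ v) (i j : ι) :
    fourthDeriv b v y i j = fourthDeriv b v y j i := by
  have hcomm {f : E → ℝ} (hf : ContDiff ℝ ∞ f) :
      dirDeriv (b i) (dirDeriv (b j) f) = dirDeriv (b j) (dirDeriv (b i) f) :=
    dirDeriv_comm (contDiff_infty.1 hf 2) _ _
  have hvi := contDiff_dirDeriv hv (b i)
  unfold fourthDeriv
  rw [hcomm (contDiff_dirDeriv hv (b j)), hcomm hv, hcomm (contDiff_dirDeriv hvi (b j)), hcomm hvi]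

theorem gradSq_eq_sum (v : E → ℝ) (y : E) :
    gradSq v y = ∑ k, dirDeriv (b k) v y * dirDeriv (b k) v y := by
  simp only [gradSq, norm_fderiv_sq_eq_sum b, sq]

theorem contDiff_corrector [FiniteDimensional ℝ E] (hv : ContDiff ℝ ∞ v) (R : ℝ) :
    ContDiff ℝ ∞ (corrector R v) := by
  let b := stdOrthonormalBasis ℝ E
  have hgrad : ContDiff ℝ ∞ (gradSq v) := by
    rw [funext (gradSq_eq_sum b v)]
    exact ContDiff.sum fun k _ => (contDiff_dirDeriv hv (b k)).mul (contDiff_dirDeriv hv (b k))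
  exact (contDiff_const.mul hgrad).sub (contDiff_const.mul (hv.mul (contDiff_dirDeriv_self hv)))

variable {b}

theorem hasTwoJetAt_inner_comp_add_smul [DecidableEq ι] (b : OrthonormalBasis ι ℝ E) (y : E)
    (i k : ι) :
    HasTwoJetAt (fun s : ℝ => ⟪b k, y + s • b i⟫) ⟪b k, y⟫ (if k = i then 1 else 0) 0 0 := by
  simp only [inner_add_right, inner_smul_right, b.inner_eq_ite]
  exact (HasTwoJetAt.affine _ _ 0).congr_jet (by simp) rfl rfl

namespace IsHessianEigenbasis

theorem hasTwoJetAt (h : IsHessianEigenbasis b l v y) (hv : ContDiff ℝ ∞ v) (i : ι) :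
    HasTwoJetAt (fun s : ℝ => v (y + s • b i)) (v y) (dirDeriv (b i) v y) (l i) 0 :=
  (hasTwoJetAt_comp_add_smul hv y (b i)).congr_jet rfl rfl (h.dirDeriv_dirDeriv_self _)

theorem hasTwoJetAt_dirDeriv [DecidableEq ι] (h : IsHessianEigenbasis b l v y) (hv : ContDiff ℝ ∞ v)
    (i k : ι) :
    HasTwoJetAt (fun s : ℝ => dirDeriv (b k) v (y + s • b i)) (dirDeriv (b k) v y)
      (if k = i then l k else 0) (thirdDeriv b v y i i k) 0 :=
  (hasTwoJetAt_comp_add_smul (contDiff_dirDeriv hv (b k)) y (b i)).congr_jet rfl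
    (h.dirDeriv_dirDeriv i k) rfl

theorem hasTwoJetAt_gradSq (h : IsHessianEigenbasis b l v y) (hv : ContDiff ℝ ∞ v) (i : ι) :
    HasTwoJetAt (fun s : ℝ => gradSq v (y + s • b i)) (gradSq v y) (2 * (l i * dirDeriv (b i) v y))
      (2 * l i ^ 2 + 2 * ∑ k, dirDeriv (b k) v y * thirdDeriv b v y i i k) 0 := by
  classical
  simp only [gradSq_eq_sum b]
  refine (HasTwoJetAt.sum Finset.univ fun k _ =>
    (h.hasTwoJetAt_dirDeriv hv i k).mul (h.hasTwoJetAt_dirDeriv hv i k)).congr_jet rfl ?_ ?_ <;>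
  simp only [mul_ite, ite_mul, mul_zero, zero_mul, Finset.sum_add_distrib, Finset.sum_ite_eq',
    Finset.mem_univ, if_true, mul_comm (thirdDeriv b v y i i _)] <;>
  ring

theorem hasTwoJetAt_radial (h : IsHessianEigenbasis b l v y) (hv : ContDiff ℝ ∞ v) (i : ι) :
    HasTwoJetAt (fun s : ℝ => dirDeriv (y + s • b i) v (y + s • b i)) (dirDeriv y v y)
      (dirDeriv (b i) v y + l i * ⟪b i, y⟫)
      (2 * l i + ∑ k, ⟪b k, y⟫ * thirdDeriv b v y i i k) 0 := by
  classical
  simp only [fun z => dirDeriv_eq_sum b z v z]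
  refine (HasTwoJetAt.sum Finset.univ fun k _ =>
    (hasTwoJetAt_inner_comp_add_smul b y i k).mul (h.hasTwoJetAt_dirDeriv hv i k)).congr_jet
      rfl ?_ ?_
  all_goals simp only [mul_ite, ite_mul, mul_zero, zero_mul, one_mul, Finset.sum_add_distrib,
    Finset.sum_ite_eq', Finset.mem_univ, if_true, zero_add]
  ring

theorem hasTwoJetAt_legendre (h : IsHessianEigenbasis b l v y) (hv : ContDiff ℝ ∞ v) (i : ι) :
    HasTwoJetAt (fun s : ℝ => legendre v (y + s • b i)) (legendre v y) (l i * ⟪b i, y⟫)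
      (l i + ∑ k, ⟪b k, y⟫ * thirdDeriv b v y i i k) 0 :=
  ((h.hasTwoJetAt_radial hv i).sub (h.hasTwoJetAt hv i)).congr_jet rfl (by ring) (by ring)

theorem hasTwoJetAt_positionSq (h : IsHessianEigenbasis b l v y) (hv : ContDiff ℝ ∞ v) (i : ι) :
    HasTwoJetAt (fun s : ℝ => positionSq v (y + s • b i)) (positionSq v y)
      (2 * l i * positionGrad v y (b i))
      (2 * (l i ^ 2 + ∑ k, positionGrad v y (b k) * thirdDeriv b v y i i k
        + l i ^ 2 * ⟪b i, y⟫ ^ 2 + legendre v y * l i)) 0 := by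
  have hw := h.hasTwoJetAt_legendre hv i
  simp only [positionSq, sq (legendre v _)]
  refine ((h.hasTwoJetAt_gradSq hv i).add (hw.mul hw)).congr_jet rfl
    (by unfold positionGrad; ring) ?_
  simp only [positionGrad, add_mul, Finset.sum_add_distrib, mul_assoc, ← Finset.mul_sum]
  ring

theorem hasTwoJetAt_corrector (h : IsHessianEigenbasis b l v y) (hv : ContDiff ℝ ∞ v) (R : ℝ)
    (i : ι) :
    HasTwoJetAt (fun s : ℝ => corrector R v (y + s • b i)) (corrector R v y)
      (l i * correctorGrad R v y (b i)
        - dirDeriv (b i) v y * ((dirDeriv y v y + v y) / R ^ 2))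
      (l i ^ 2 + ∑ k, correctorGrad R v y (b k) * thirdDeriv b v y i i k
        - (l i * dirDeriv y v y + 2 * dirDeriv (b i) v y * (dirDeriv (b i) v y + l i * ⟪b i, y⟫)
          + 2 * v y * l i) / R ^ 2) 0 := by
  refine (((h.hasTwoJetAt_gradSq hv i).const_mul (1 / 2)).sub
    (((h.hasTwoJetAt hv i).mul (h.hasTwoJetAt_radial hv i)).const_mul (1 / R ^ 2))).congr_jet
      rfl (by unfold correctorGrad; ring) ?_
  simp only [correctorGrad, sub_mul, Finset.sum_sub_distrib, mul_assoc, ← Finset.mul_sum]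
  ring

theorem hasTwoJetAt_dirDeriv_dirDeriv_self (h : IsHessianEigenbasis b l v y)
    (hv : ContDiff ℝ ∞ v) (i m : ι) :
    HasTwoJetAt (fun s : ℝ => dirDeriv (b m) (dirDeriv (b m) v) (y + s • b i)) (l m)
      (thirdDeriv b v y i m m) (fourthDeriv b v y i m) 0 :=
  (hasTwoJetAt_comp_add_smul (contDiff_dirDeriv (contDiff_dirDeriv hv (b m)) (b m)) y
    (b i)).congr_jet (h.dirDeriv_dirDeriv_self _) rfl rfl

theorem hasTwoJetAt_log_det [DecidableEq ι] (h : IsHessianEigenbasis b l v y)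
    (hv : ContDiff ℝ ∞ v) (hl : ∀ i, l i ≠ 0) (m : ι) :
    HasTwoJetAt (fun s : ℝ => Real.log
        (Matrix.of fun i j => dirDeriv (b i) (dirDeriv (b j) v) (y + s • b m)).det)
      (∑ i, Real.log (l i)) (∑ i, thirdDeriv b v y m i i / l i)
      (∑ i, fourthDeriv b v y m i / l i
        - ∑ i, ∑ j, thirdDeriv b v y m i j ^ 2 / (l i * l j)) 0 := by
  refine (hasTwoJetAt_log_det_of_diagonal hl (T := .of (thirdDeriv b v y m))
    (Q := .of fun i j => dirDeriv (b m) (dirDeriv (b m) (dirDeriv (b i) (dirDeriv (b j) v))) y)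
    fun i j => (hasTwoJetAt_comp_add_smul (contDiff_dirDeriv (contDiff_dirDeriv hv (b j)) (b i)) y
      (b m)).congr_jet ?_ rfl rfl).congr_jet rfl rfl ?_
  · rw [h.dirDeriv_dirDeriv, Matrix.diagonal_apply]
    grind
  · simp only [Matrix.of_apply, thirdDeriv_swap_right b hv m _, sq]
    rfl

end IsHessianEigenbasis

end TestQuantities

section InteriorEstimate

variable {E : Type*} [NormedAddCommGroup E] [InnerProductSpace ℝ E]

/-- The test function of the maximum principle, at the point `y` in the direction `e`. -/
def testFunction (R B a : ℝ) (v : E → ℝ) (y e : E) : ℝ :=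
  Real.log (dirDeriv e (dirDeriv e v) y) + B * corrector R v y - a * Real.log (v y)

section MaximumPrinciple

variable {ι : Type*} [Fintype ι] {b : OrthonormalBasis ι ℝ E} {l : ι → ℝ} {v : E → ℝ} {y : E}
  {R B a : ℝ} {m : ι}

theorem sum_fourthDeriv_div_le (hv : ContDiff ℝ ∞ v) (hl : ∀ i, 0 < l i) :
    (∑ i, fourthDeriv b v y m i / l i
        - ∑ i, ∑ j, thirdDeriv b v y m i j ^ 2 / (l i * l j)) / l m
      ≤ ∑ i, (fourthDeriv b v y i m / l m - thirdDeriv b v y i m m ^ 2 / l m ^ 2) / l i := by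
  have hsq : ∑ i, thirdDeriv b v y i m m ^ 2 / (l i * l m)
      ≤ ∑ i, ∑ j, thirdDeriv b v y m i j ^ 2 / (l i * l j) := by
    gcongr with i
    rw [thirdDeriv_swap_left b hv i m m]
    exact Finset.single_le_sum (f := fun j => thirdDeriv b v y m i j ^ 2 / (l i * l j))
      (fun j _ => div_nonneg (sq_nonneg _) (mul_pos (hl i) (hl j)).le) (Finset.mem_univ m)
  refine (div_le_div_of_nonneg_right (sub_le_sub_left hsq _) (hl m).le).trans_eq ?_
  rw [← Finset.sum_sub_distrib, Finset.sum_div]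
  refine Finset.sum_congr rfl fun i _ => ?_
  have := (hl i).ne'
  have := (hl m).ne'
  rw [fourthDeriv_comm b hv m i]
  field_simp

theorem sum_sum_mul_thirdDeriv_div (hv : ContDiff ℝ ∞ v) (ζ : ι → ℝ) :
    ∑ i, (∑ k, ζ k * thirdDeriv b v y i i k) / l i
      = ∑ k, ζ k * ∑ i, thirdDeriv b v y k i i / l i := by
  simp only [Finset.sum_div, Finset.mul_sum]
  rw [Finset.sum_comm]
  refine Finset.sum_congr rfl fun k _ => Finset.sum_congr rfl fun i _ => ?_
  rw [thirdDeriv_swap_right b hv i i k, thirdDeriv_swap_left b hv i k i, mul_div_assoc]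

theorem sum_corrector_deriv_deriv_div (hv : ContDiff ℝ ∞ v) (hl : ∀ i, l i ≠ 0) :
    ∑ i, (l i ^ 2 + ∑ k, correctorGrad R v y (b k) * thirdDeriv b v y i i k
        - (l i * dirDeriv y v y + 2 * dirDeriv (b i) v y * (dirDeriv (b i) v y + l i * ⟪b i, y⟫)
          + 2 * v y * l i) / R ^ 2) / l i
      = ∑ i, l i + ∑ k, correctorGrad R v y (b k) * ∑ i, thirdDeriv b v y k i i / l i
        - ((Fintype.card ι + 2) * dirDeriv y v y + 2 * Fintype.card ι * v y
          + 2 * ∑ i, dirDeriv (b i) v y ^ 2 / l i) / R ^ 2 := by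
  have hterm (i : ι) : (l i ^ 2 + ∑ k, correctorGrad R v y (b k) * thirdDeriv b v y i i k
        - (l i * dirDeriv y v y + 2 * dirDeriv (b i) v y * (dirDeriv (b i) v y + l i * ⟪b i, y⟫)
          + 2 * v y * l i) / R ^ 2) / l i
      = l i + (∑ k, correctorGrad R v y (b k) * thirdDeriv b v y i i k) / l i
        - (dirDeriv y v y + 2 * (dirDeriv (b i) v y ^ 2 / l i)
          + 2 * (⟪b i, y⟫ * dirDeriv (b i) v y) + 2 * v y) / R ^ 2 := by
    have := hl i
    field_simp
    ring
  simp only [hterm, Finset.sum_sub_distrib, Finset.sum_add_distrib, ← Finset.sum_div,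
    ← Finset.mul_sum, Finset.sum_const, Finset.card_univ, nsmul_eq_mul,
    sum_sum_mul_thirdDeriv_div hv, ← dirDeriv_eq_sum]
  ring

theorem sum_log_deriv_deriv_div (hl : ∀ i, l i ≠ 0) :
    ∑ i, (l i / v y - dirDeriv (b i) v y ^ 2 / v y ^ 2) / l i
      = Fintype.card ι / v y - (∑ i, dirDeriv (b i) v y ^ 2 / l i) / v y ^ 2 := by
  have hterm (i : ι) : (l i / v y - dirDeriv (b i) v y ^ 2 / v y ^ 2) / l i
      = 1 / v y - dirDeriv (b i) v y ^ 2 / l i / v y ^ 2 := by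
    rw [sub_div, div_div_cancel_left' (hl i), one_div, div_right_comm]
  simp only [hterm, Finset.sum_sub_distrib, ← Finset.sum_div, Finset.sum_const, Finset.card_univ,
    nsmul_eq_mul]
  ring

namespace IsHessianEigenbasis

theorem hasTwoJetAt_testFunction (h : IsHessianEigenbasis b l v y) (hv : ContDiff ℝ ∞ v)
    (hlm : l m ≠ 0) (hvy : v y ≠ 0) (i : ι) :
    HasTwoJetAt (fun s : ℝ => testFunction R B a v (y + s • b i) (b m))
      (testFunction R B a v y (b m))
      (thirdDeriv b v y i m m / l m + B * (l i * correctorGrad R v y (b i)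
          - dirDeriv (b i) v y * ((dirDeriv y v y + v y) / R ^ 2))
        - a * (dirDeriv (b i) v y / v y))
      (fourthDeriv b v y i m / l m - thirdDeriv b v y i m m ^ 2 / l m ^ 2
        + B * (l i ^ 2 + ∑ k, correctorGrad R v y (b k) * thirdDeriv b v y i i k
          - (l i * dirDeriv y v y + 2 * dirDeriv (b i) v y * (dirDeriv (b i) v y + l i * ⟪b i, y⟫)
            + 2 * v y * l i) / R ^ 2)
        - a * (l i / v y - dirDeriv (b i) v y ^ 2 / v y ^ 2)) 0 :=
  ((((h.hasTwoJetAt_dirDeriv_dirDeriv_self hv i m).log hlm).add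
    ((h.hasTwoJetAt_corrector hv R i).const_mul B)).sub
      (((h.hasTwoJetAt hv i).log hvy).const_mul a)).congr_jet
    (by rw [testFunction, h.dirDeriv_dirDeriv_self]) rfl rfl

theorem sum_mul_thirdDeriv_of_isLocalMax (h : IsHessianEigenbasis b l v y) (hv : ContDiff ℝ ∞ v)
    (hlm : l m ≠ 0) (hvy : v y ≠ 0)
    (hmax : ∀ i, IsLocalMax (fun s : ℝ => testFunction R B a v (y + s • b i) (b m)) 0)
    (Z : ι → ℝ) :
    ∑ k, Z k * thirdDeriv b v y m m k
      = l m * ((B * ((dirDeriv y v y + v y) / R ^ 2) + a / v y) * ∑ k, dirDeriv (b k) v y * Z k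
        - B * ∑ k, l k * correctorGrad R v y (b k) * Z k) := by
  have hcrit (k : ι) : thirdDeriv b v y m m k
      = l m * (dirDeriv (b k) v y * (B * ((dirDeriv y v y + v y) / R ^ 2) + a / v y)
        - B * (l k * correctorGrad R v y (b k))) := by
    have hk := (h.hasTwoJetAt_testFunction hv hlm hvy k).deriv_eq_zero_of_isLocalMax (hmax k)
    rw [thirdDeriv_swap_right b hv, thirdDeriv_swap_left b hv, mul_comm (l m), ← div_eq_iff hlm]
    linear_combination hk
  simp only [hcrit, Finset.mul_sum, ← Finset.sum_sub_distrib]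
  exact Finset.sum_congr rfl fun k _ => by ring

theorem logDet_deriv_deriv_le_of_isLocalMax (h : IsHessianEigenbasis b l v y)
    (hv : ContDiff ℝ ∞ v) (hl : ∀ i, 0 < l i) (hvy : v y ≠ 0) (hR : R ≠ 0)
    (ha : 2 * B * v y ^ 2 ≤ a * R ^ 2)
    (hmax : ∀ i, IsLocalMax (fun s : ℝ => testFunction R B a v (y + s • b i) (b m)) 0) :
    (∑ i, fourthDeriv b v y m i / l i
        - ∑ i, ∑ j, thirdDeriv b v y m i j ^ 2 / (l i * l j)) / l m
      + B * (∑ i, l i + ∑ k, correctorGrad R v y (b k) * ∑ i, thirdDeriv b v y k i i / l i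
        - ((Fintype.card ι + 2) * dirDeriv y v y + 2 * Fintype.card ι * v y) / R ^ 2)
      - a * Fintype.card ι / v y ≤ 0 := by
  have htrace := Finset.sum_nonpos fun i (_ : i ∈ Finset.univ) =>
    div_nonpos_of_nonpos_of_nonneg
      ((h.hasTwoJetAt_testFunction hv (hl m).ne' hvy i).deriv_deriv_nonpos_of_isLocalMax (hmax i))
      (hl i).le
  have hlin (u c d : ι → ℝ) : ∑ i, (u i + B * c i - a * d i) / l i
      = ∑ i, u i / l i + B * ∑ i, c i / l i - a * ∑ i, d i / l i := by
    simp only [sub_div, add_div, mul_div_assoc, Finset.sum_add_distrib, Finset.sum_sub_distrib,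
      Finset.mul_sum]
  rw [hlin, sum_corrector_deriv_deriv_div hv fun i => (hl i).ne',
    sum_log_deriv_deriv_div fun i => (hl i).ne'] at htrace
  set P := ∑ i, dirDeriv (b i) v y ^ 2 / l i
  have hP : 0 ≤ P * (a / v y ^ 2 - 2 * B / R ^ 2) := by
    refine mul_nonneg (Finset.sum_nonneg fun i _ => div_nonneg (sq_nonneg _) (hl i).le) ?_
    rw [sub_nonneg, div_le_div_iff₀ (by positivity) (by positivity)]
    exact ha
  linear_combination htrace + sum_fourthDeriv_div_le hv hl + hP

end IsHessianEigenbasis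

end MaximumPrinciple

/-- `v` is a positive uniformly convex solution, on the ball of radius `R`, of the Monge–Ampère
equation `log det D²v = log F + α log v + β log ρ` with the Robin condition `⟨y, ∇v⟩ = v` on the
boundary. The equation is tested in every orthonormal basis. -/
structure RobinMongeAmpere (n : ℕ) (R α β : ℝ) (v F : E → ℝ) : Prop where
  radius_pos : 0 < R
  contDiff : ContDiff ℝ ∞ v
  contDiff_source : ContDiff ℝ ∞ F
  pos : ∀ y, ‖y‖ ≤ R → 0 < v y
  source_pos : ∀ y, ‖y‖ ≤ R → 0 < F y
  positionSq_pos : ∀ y, ‖y‖ ≤ R → 0 < positionSq v y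
  hessian_pos : ∀ y, ‖y‖ ≤ R → ∀ e, e ≠ 0 → 0 < dirDeriv e (dirDeriv e v) y
  robin : ∀ y, ‖y‖ = R → dirDeriv y v y = v y
  log_det_eq : ∀ y, ‖y‖ ≤ R → ∀ b : OrthonormalBasis (Fin n) ℝ E,
    Real.log (Matrix.of fun i j => dirDeriv (b i) (dirDeriv (b j) v) y).det
      = Real.log (F y) + α * Real.log (v y) + β * Real.log (positionSq v y)

/-- A priori bounds by `N` on the ball of radius `R`: first order for `v`, second order for `F`, and
lower bounds for `v`, `ρ` and `F`. -/
structure AprioriBounds (R N : ℝ) (v F : E → ℝ) : Prop where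
  norm_le : ∀ y, ‖y‖ ≤ R → ‖v y‖ ≤ N
  norm_inv_le : ∀ y, ‖y‖ ≤ R → ‖(v y)⁻¹‖ ≤ N
  norm_fderiv_le : ∀ y, ‖y‖ ≤ R → ‖fderiv ℝ v y‖ ≤ N
  norm_inv_positionSq_le : ∀ y, ‖y‖ ≤ R → ‖(positionSq v y)⁻¹‖ ≤ N
  source_bound : CTwoBound R N F
  norm_inv_source_le : ∀ y, ‖y‖ ≤ R → ‖(F y)⁻¹‖ ≤ N

variable {n : ℕ} {R N α β B a : ℝ} {v F : E → ℝ} {b : OrthonormalBasis (Fin n) ℝ E}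
  {l : Fin n → ℝ} {y e : E} {m : Fin n}

theorem norm_div_le_mul_of_le {x z r s : ℝ} (hx : ‖x‖ ≤ r) (hz : ‖z⁻¹‖ ≤ s) : ‖x / z‖ ≤ r * s :=
  div_eq_mul_inv x z ▸ norm_mul_le_of_le hx hz

theorem norm_sq_le_of_le {x r : ℝ} (hx : ‖x‖ ≤ r) : ‖x ^ 2‖ ≤ r ^ 2 :=
  (norm_pow_le x 2).trans (pow_le_pow_left₀ (norm_nonneg x) hx 2)

theorem norm_inner_le_of_norm_eq_one (he : ‖e‖ = 1) (hy : ‖y‖ ≤ R) : ‖⟪e, y⟫‖ ≤ R := by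
  simpa [he] using (norm_inner_le_norm (𝕜 := ℝ) e y).trans
    (mul_le_mul_of_nonneg_left hy (norm_nonneg e))

namespace AprioriBounds

theorem norm_dirDeriv_le (A : AprioriBounds R N v F) (hy : ‖y‖ ≤ R) (he : ‖e‖ = 1) :
    ‖dirDeriv e v y‖ ≤ N :=
  (fderiv ℝ v y).unit_le_opNorm e he.le |>.trans (A.norm_fderiv_le y hy)

theorem norm_radial_le (A : AprioriBounds R N v F) (hy : ‖y‖ ≤ R) : ‖dirDeriv y v y‖ ≤ N * R :=
  (fderiv ℝ v y).le_of_opNorm_le_of_le (A.norm_fderiv_le y hy) hy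

theorem norm_legendre_le (A : AprioriBounds R N v F) (hy : ‖y‖ ≤ R) :
    ‖legendre v y‖ ≤ N * R + N :=
  norm_sub_le_of_le (A.norm_radial_le hy) (A.norm_le y hy)

theorem norm_positionGrad_le (A : AprioriBounds R N v F) (hy : ‖y‖ ≤ R) (he : ‖e‖ = 1) :
    ‖positionGrad v y e‖ ≤ N + (N * R + N) * R :=
  norm_add_le_of_le (A.norm_dirDeriv_le hy he)
    (norm_mul_le_of_le (A.norm_legendre_le hy) (norm_inner_le_of_norm_eq_one he hy))

theorem norm_correctorGrad_le (A : AprioriBounds R N v F) (hy : ‖y‖ ≤ R) (he : ‖e‖ = 1) :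
    ‖correctorGrad R v y e‖ ≤ N + N * ‖(R ^ 2)⁻¹‖ * R :=
  norm_sub_le_of_le (A.norm_dirDeriv_le hy he) (norm_mul_le_of_le
    (norm_div_le_mul_of_le (A.norm_le y hy) le_rfl) (norm_inner_le_of_norm_eq_one he hy))

end AprioriBounds

namespace RobinMongeAmpere

theorem eigenvalue_pos (H : RobinMongeAmpere n R α β v F) (h : IsHessianEigenbasis b l v y)
    (hy : ‖y‖ ≤ R) (i : Fin n) : 0 < l i :=
  h.dirDeriv_dirDeriv_self i ▸ H.hessian_pos y hy (b i) (b.orthonormal.ne_zero i)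

theorem hasTwoJetAt_rhs (H : RobinMongeAmpere n R α β v F) (h : IsHessianEigenbasis b l v y)
    (hy : ‖y‖ ≤ R) (k : Fin n) :
    HasTwoJetAt (fun s : ℝ => Real.log (F (y + s • b k)) + α * Real.log (v (y + s • b k))
        + β * Real.log (positionSq v (y + s • b k)))
      (Real.log (F y) + α * Real.log (v y) + β * Real.log (positionSq v y))
      (dirDeriv (b k) F y / F y + α * (dirDeriv (b k) v y / v y)
        + β * (2 * l k * positionGrad v y (b k) / positionSq v y))
      (dirDeriv (b k) (dirDeriv (b k) F) y / F y - dirDeriv (b k) F y ^ 2 / F y ^ 2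
        + α * (l k / v y - dirDeriv (b k) v y ^ 2 / v y ^ 2)
        + β * (2 * (l k ^ 2 + ∑ j, positionGrad v y (b j) * thirdDeriv b v y k k j
            + l k ^ 2 * ⟪b k, y⟫ ^ 2 + legendre v y * l k) / positionSq v y
          - (2 * l k * positionGrad v y (b k)) ^ 2 / positionSq v y ^ 2)) 0 :=
  (((hasTwoJetAt_comp_add_smul H.contDiff_source y (b k)).log (H.source_pos y hy).ne').add
    (((h.hasTwoJetAt H.contDiff k).log (H.pos y hy).ne').const_mul α)).add
      (((h.hasTwoJetAt_positionSq H.contDiff k).log (H.positionSq_pos y hy).ne').const_mul β)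

theorem eventually_norm_add_smul_le (hy : ‖y‖ < R) (e : E) :
    ∀ᶠ s in 𝓝 (0 : ℝ), ‖y + s • e‖ ≤ R := by
  have hcont : ContinuousAt (fun s : ℝ => ‖y + s • e‖) 0 := by fun_prop
  exact (hcont.eventually_lt_const (by simpa using hy)).mono fun _ => le_of_lt

theorem interior_inequality (H : RobinMongeAmpere n R α β v F) (h : IsHessianEigenbasis b l v y)
    (hy : ‖y‖ < R) (ha : 2 * B * v y ^ 2 ≤ a * R ^ 2)
    (hmax : ∀ z, ‖z‖ ≤ R → testFunction R B a v z (b m) ≤ testFunction R B a v y (b m)) :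
    l m * (B + β * (2 * (1 + ⟪b m, y⟫ ^ 2) / positionSq v y
        - (2 * positionGrad v y (b m) / positionSq v y) ^ 2))
      + B * (∑ i, l i - l m)
      + ((dirDeriv (b m) (dirDeriv (b m) F) y / F y - (dirDeriv (b m) F y / F y) ^ 2) / l m
        + α * (1 / v y - (dirDeriv (b m) v y / v y) ^ 2 / l m)
        + 2 * β * legendre v y / positionSq v y
        + 2 * β / positionSq v y * ((B * ((dirDeriv y v y + v y) / R ^ 2) + a / v y)
          * ∑ k, dirDeriv (b k) v y * positionGrad v y (b k))
        + B * (∑ k, correctorGrad R v y (b k) * (dirDeriv (b k) F y / F y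
            + α * (dirDeriv (b k) v y / v y))
          - ((n + 2) * dirDeriv y v y + 2 * n * v y) / R ^ 2)
        - a * n / v y) ≤ 0 := by
  have hl := H.eigenvalue_pos h hy.le
  have hv := H.contDiff
  have hvy := (H.pos y hy.le).ne'
  have hlocal (k : Fin n) :
      IsLocalMax (fun s : ℝ => testFunction R B a v (y + s • b k) (b m)) 0 := by
    filter_upwards [eventually_norm_add_smul_le hy (b k)] with s hs
    simpa using hmax _ hs
  have hjet (k : Fin n) := (h.hasTwoJetAt_log_det hv (fun i => (hl i).ne') k).unique
    (H.hasTwoJetAt_rhs h hy.le k)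
    ((eventually_norm_add_smul_le hy (b k)).mono fun s hs => H.log_det_eq _ hs b)
  have hsecond := h.logDet_deriv_deriv_le_of_isLocalMax hv hl hvy H.radius_pos.ne' ha hlocal
  have hlm := (hl m).ne'
  have hρ := (H.positionSq_pos y hy.le).ne'
  have hFy := (H.source_pos y hy.le).ne'
  have hsplit : ∑ k, correctorGrad R v y (b k) * (dirDeriv (b k) F y / F y
        + α * (dirDeriv (b k) v y / v y) + β * (2 * l k * positionGrad v y (b k) / positionSq v y))
      = ∑ k, correctorGrad R v y (b k) * (dirDeriv (b k) F y / F y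
          + α * (dirDeriv (b k) v y / v y))
        + 2 * β / positionSq v y
          * ∑ k, l k * correctorGrad R v y (b k) * positionGrad v y (b k) := by
    rw [Finset.mul_sum, ← Finset.sum_add_distrib]
    exact Finset.sum_congr rfl fun k _ => by ring
  simp only [(hjet _).2.1] at hsecond
  rw [(hjet m).2.2, hsplit,
    h.sum_mul_thirdDeriv_of_isLocalMax hv hlm hvy hlocal, Fintype.card_fin] at hsecond
  refine le_of_eq_of_le ?_ hsecond
  field_simp
  ring

end RobinMongeAmpere

theorem AprioriBounds.exists_norm_interior_remainder_le (n : ℕ) (R N α β B a : ℝ) :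
    ∃ C, ∀ {v F : E → ℝ}, AprioriBounds R N v F → ∀ {b : OrthonormalBasis (Fin n) ℝ E} {y : E},
      ‖y‖ ≤ R → ∀ {m : Fin n} {x : ℝ}, 1 ≤ x →
      ‖(dirDeriv (b m) (dirDeriv (b m) F) y / F y - (dirDeriv (b m) F y / F y) ^ 2) / x
        + α * (1 / v y - (dirDeriv (b m) v y / v y) ^ 2 / x)
        + 2 * β * legendre v y / positionSq v y
        + 2 * β / positionSq v y * ((B * ((dirDeriv y v y + v y) / R ^ 2) + a / v y)
          * ∑ k, dirDeriv (b k) v y * positionGrad v y (b k))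
        + B * (∑ k, correctorGrad R v y (b k) * (dirDeriv (b k) F y / F y
            + α * (dirDeriv (b k) v y / v y))
          - ((n + 2) * dirDeriv y v y + 2 * n * v y) / R ^ 2)
        - a * n / v y‖ ≤ C := by
  apply Exists.intro
  case h =>
    intro v F A b y hy m x hx
    have hb (k : Fin n) := b.norm_eq_one k
    have hxinv : ‖x⁻¹‖ ≤ 1 := by
      rw [norm_inv, Real.norm_of_nonneg (zero_le_one.trans hx)]
      exact inv_le_one_of_one_le₀ hx
    have hR : ‖(R ^ 2)⁻¹‖ ≤ ‖(R ^ 2)⁻¹‖ := le_rfl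
    have hV := A.norm_le y hy
    have hVinv := A.norm_inv_le y hy
    have hY := A.norm_radial_le hy
    have hρ := A.norm_inv_positionSq_le y hy
    have hp (k : Fin n) := A.norm_dirDeriv_le hy (hb k)
    have hF (k : Fin n) := norm_div_le_mul_of_le (A.source_bound.norm_dirDeriv_le y hy _ (hb k))
      (A.norm_inv_source_le y hy)
    have hFF := norm_div_le_mul_of_le (A.source_bound.norm_dirDeriv_dirDeriv_le y hy _ (hb m))
      (A.norm_inv_source_le y hy)
    have hlog (k : Fin n) := norm_div_le_mul_of_le (hp k) hVinv
    have hζ (k : Fin n) := A.norm_correctorGrad_le hy (hb k)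
    have hZ (k : Fin n) := A.norm_positionGrad_le hy (hb k)
    exact norm_sub_le_of_le (norm_add_le_of_le (norm_add_le_of_le (norm_add_le_of_le
      (norm_add_le_of_le
        (norm_div_le_mul_of_le (norm_sub_le_of_le hFF (norm_sq_le_of_le (hF m))) hxinv)
        (norm_mul_le_of_le le_rfl (norm_sub_le_of_le (norm_div_le_mul_of_le le_rfl hVinv)
          (norm_div_le_mul_of_le (norm_sq_le_of_le (hlog m)) hxinv))))
        (norm_div_le_mul_of_le (norm_mul_le_of_le le_rfl (A.norm_legendre_le hy)) hρ))
        (norm_mul_le_of_le (norm_div_le_mul_of_le le_rfl hρ) (norm_mul_le_of_le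
          (norm_add_le_of_le (norm_mul_le_of_le le_rfl
            (norm_div_le_mul_of_le (norm_add_le_of_le hY hV) hR))
            (norm_div_le_mul_of_le le_rfl hVinv))
          (norm_sum_le_of_le _ fun k _ => norm_mul_le_of_le (hp k) (hZ k)))))
        (norm_mul_le_of_le le_rfl (norm_sub_le_of_le
          (norm_sum_le_of_le _ fun k _ => norm_mul_le_of_le (hζ k)
            (norm_add_le_of_le (hF k) (norm_mul_le_of_le le_rfl (hlog k))))
          (norm_div_le_mul_of_le (norm_add_le_of_le (norm_mul_le_of_le le_rfl hY)
            (norm_mul_le_of_le le_rfl hV)) hR))))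
      (norm_div_le_mul_of_le le_rfl hVinv)

theorem RobinMongeAmpere.exists_interior_bound (n : ℕ) (R N α β : ℝ) :
    ∃ B > 0, ∃ a ≥ 0, ∃ C : ℝ, ∀ {v F : E → ℝ},
      RobinMongeAmpere n R α β v F → AprioriBounds R N v F →
      ∀ {b : OrthonormalBasis (Fin n) ℝ E} {l : Fin n → ℝ} {y : E},
        IsHessianEigenbasis b l v y → ‖y‖ < R → ∀ {m : Fin n},
        (∀ z, ‖z‖ ≤ R → testFunction R B a v z (b m) ≤ testFunction R B a v y (b m)) →
        1 ≤ l m → l m ≤ C := by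
  obtain ⟨T, hT⟩ : ∃ T, ∀ {v F : E → ℝ}, AprioriBounds R N v F → ∀ {e y : E}, ‖e‖ = 1 → ‖y‖ ≤ R →
      ‖β * (2 * (1 + ⟪e, y⟫ ^ 2) / positionSq v y
        - (2 * positionGrad v y e / positionSq v y) ^ 2)‖ ≤ T :=
    ⟨_, fun A _ _ he hy => norm_mul_le_of_le le_rfl (norm_sub_le_of_le
      (norm_div_le_mul_of_le (norm_mul_le_of_le le_rfl (norm_add_le_of_le le_rfl
        (norm_sq_le_of_le (norm_inner_le_of_norm_eq_one he hy)))) (A.norm_inv_positionSq_le _ hy))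
      (norm_sq_le_of_le (norm_div_le_mul_of_le (norm_mul_le_of_le le_rfl
        (A.norm_positionGrad_le hy he)) (A.norm_inv_positionSq_le _ hy))))⟩
  let B := |T| + 1
  let a := 2 * B * N ^ 2 / R ^ 2
  obtain ⟨C, hC⟩ := AprioriBounds.exists_norm_interior_remainder_le (E := E) n R N α β B a
  refine ⟨B, by positivity, a, by positivity, C, fun {v F} H A {b l y} h hy {m} hmax hlm => ?_⟩
  have ha : 2 * B * v y ^ 2 ≤ a * R ^ 2 := by
    have := H.radius_pos
    rw [div_mul_cancel₀ _ (by positivity)]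
    gcongr
    · exact (H.pos y hy.le).le
    · exact (le_abs_self _).trans (A.norm_le y hy.le)
  have hcoeff := neg_le_of_abs_le ((hT A (b.norm_eq_one m) hy.le).trans (le_abs_self T))
  have hrem := neg_le_of_abs_le (hC A (b := b) hy.le (m := m) hlm)
  have hsum : 0 ≤ B * (∑ i, l i - l m) := mul_nonneg (by positivity) (sub_nonneg.2
    (Finset.single_le_sum (fun i _ => (H.eigenvalue_pos h hy.le i).le) (Finset.mem_univ m)))
  linarith [H.interior_inequality h hy ha hmax,
    mul_le_mul_of_nonneg_left hcoeff (zero_le_one.trans hlm)]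

end InteriorEstimate

section BoundaryEstimate

variable {E : Type*} [NormedAddCommGroup E] [InnerProductSpace ℝ E]

section Sphere

variable {f v : E → ℝ} {y z : E} {R : ℝ}

theorem norm_cos_smul_add_sin_smul (hz : ‖z‖ = ‖y‖) (hyz : ⟪y, z⟫ = 0) (t : ℝ) :
    ‖Real.cos t • y + Real.sin t • z‖ = ‖y‖ := by
  refine (sq_eq_sq₀ (norm_nonneg _) (norm_nonneg _)).1 ?_
  rw [norm_add_sq_real, inner_smul_left, inner_smul_right, hyz, norm_smul, norm_smul, hz, mul_pow,
    mul_pow, Real.norm_eq_abs, Real.norm_eq_abs, sq_abs, sq_abs]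
  linear_combination ‖y‖ ^ 2 * Real.sin_sq_add_cos_sq t

/-- Differentiate `f = 0` twice along the great circle through `y` in the direction `z`. -/
theorem dirDeriv_of_sphere_of_norm_eq (hf : ContDiff ℝ ∞ f) (h0 : ∀ x, ‖x‖ = ‖y‖ → f x = 0)
    (hz : ‖z‖ = ‖y‖) (hyz : ⟪y, z⟫ = 0) :
    dirDeriv z f y = 0 ∧ dirDeriv z (dirDeriv z f) y = dirDeriv y f y := by
  let γ (t : ℝ) : E := Real.cos t • y + Real.sin t • z
  let γ' (t : ℝ) : E := -Real.sin t • y + Real.cos t • z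
  have hγ (t : ℝ) : HasDerivAt γ (γ' t) t :=
    ((Real.hasDerivAt_cos t).smul_const y).add ((Real.hasDerivAt_sin t).smul_const z)
  have hγ' : HasDerivAt γ' (-y) 0 :=
    (((Real.hasDerivAt_sin 0).neg.smul_const y).add
      ((Real.hasDerivAt_cos 0).smul_const z)).congr_deriv (by simp)
  have hfirst (t : ℝ) : fderiv ℝ f (γ t) (γ' t) = 0 := by
    have hconst : f ∘ γ = fun _ => 0 := funext fun t => h0 _ (norm_cos_smul_add_sin_smul hz hyz t)
    have := (hf.differentiable (by simp) (γ t)).hasFDerivAt.comp_hasDerivAt t (hγ t)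
    rw [hconst] at this
    exact this.unique (hasDerivAt_const t 0)
  have hγ0 : γ 0 = y := by simp [γ]
  have hγ'0 : γ' 0 = z := by simp [γ']
  have hdiff : Differentiable ℝ (fderiv ℝ f) :=
    (hf.fderiv_right (m := ∞) le_rfl).differentiable (by simp)
  have hsecond := ((hdiff (γ 0)).hasFDerivAt.comp_hasDerivAt (0 : ℝ) (hγ 0)).clm_apply hγ'
  rw [show (fun t => (fderiv ℝ f ∘ γ) t (γ' t)) = fun _ => 0 from funext hfirst] at hsecond
  have := hsecond.unique (hasDerivAt_const 0 0)
  simp only [Function.comp_apply, hγ0, hγ'0, map_neg] at this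
  refine ⟨by simpa only [hγ0, hγ'0, dirDeriv] using hfirst 0, ?_⟩
  rw [dirDeriv_dirDeriv (contDiff_infty.1 hf 2)]
  unfold dirDeriv
  linarith

theorem dirDeriv_of_sphere (hf : ContDiff ℝ ∞ f) (hy : y ≠ 0) (h0 : ∀ x, ‖x‖ = ‖y‖ → f x = 0)
    (hyz : ⟪y, z⟫ = 0) :
    dirDeriv z f y = 0 ∧ ‖y‖ ^ 2 * dirDeriv z (dirDeriv z f) y = ‖z‖ ^ 2 * dirDeriv y f y := by
  rcases eq_or_ne z 0 with rfl | hz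
  · simp [dirDeriv]
  have := norm_pos_iff.2 hy
  have hzpos : 0 < ‖z‖ := norm_pos_iff.2 hz
  obtain ⟨hfirst, hsecond⟩ := dirDeriv_of_sphere_of_norm_eq (z := (‖y‖ / ‖z‖) • z) hf h0
    (by rw [norm_smul, norm_div, norm_norm, norm_norm, div_mul_cancel₀ _ hzpos.ne'])
    (by rw [inner_smul_right, hyz, mul_zero])
  rw [dirDeriv_smul] at hfirst
  refine ⟨(mul_eq_zero.1 hfirst).resolve_left (by positivity), ?_⟩
  rw [dirDeriv_dirDeriv_smul (contDiff_infty.1 hf 2)] at hsecond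
  rw [← hsecond]
  field_simp

theorem contDiff_legendre (hv : ContDiff ℝ ∞ v) : ContDiff ℝ ∞ (legendre v) :=
  (contDiff_dirDeriv_self hv).sub hv

theorem dirDeriv_radial (hf : ContDiff ℝ ∞ f) (a y : E) :
    dirDeriv a (fun x => dirDeriv x f x) y = dirDeriv a f y + dirDeriv y (dirDeriv a f) y := by
  have hdiff : DifferentiableAt ℝ (fderiv ℝ f) y :=
    (hf.fderiv_right (m := ∞) le_rfl).differentiable (by simp) y
  rw [dirDeriv_comm (contDiff_infty.1 hf 2), dirDeriv_dirDeriv (contDiff_infty.1 hf 2)]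
  unfold dirDeriv
  rw [fderiv_clm_apply hdiff differentiableAt_fun_id]
  simp

theorem dirDeriv_legendre (hv : ContDiff ℝ ∞ v) (a : E) :
    dirDeriv a (legendre v) = fun y => dirDeriv y (dirDeriv a v) y := by
  funext y
  have hsub : dirDeriv a (legendre v) y = dirDeriv a (fun x => dirDeriv x v x) y - dirDeriv a v y :=
    DFunLike.congr_fun (fderiv_fun_sub ((contDiff_dirDeriv_self hv).differentiable (by simp) y)
      (hv.differentiable (by simp) y)) a
  rw [hsub, dirDeriv_radial hv, add_sub_cancel_left]

theorem dirDeriv_dirDeriv_radial_of_robin (hv : ContDiff ℝ ∞ v) (hR : 0 < R)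
    (hrobin : ∀ x, ‖x‖ = R → dirDeriv x v x = v x) (hy : ‖y‖ = R) (a : E) :
    dirDeriv a (dirDeriv y v) y = dirDeriv y (dirDeriv y v) y / R ^ 2 * ⟪y, a⟫ := by
  subst hy
  have htangent := (dirDeriv_of_sphere (z := a - (⟪y, a⟫ / ‖y‖ ^ 2) • y) (contDiff_legendre hv)
    (norm_pos_iff.1 hR) (fun x hx => sub_eq_zero.2 (hrobin x hx)) (by
      rw [inner_sub_right, inner_smul_right, real_inner_self_eq_norm_sq]
      field_simp
      ring)).1
  rw [dirDeriv_sub, dirDeriv_smul, dirDeriv_legendre hv, dirDeriv_legendre hv] at htangent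
  rw [dirDeriv_comm (contDiff_infty.1 hv 2)]
  linear_combination htangent

theorem dirDeriv_dirDeriv_dirDeriv_of_robin (hv : ContDiff ℝ ∞ v) (hR : 0 < R)
    (hrobin : ∀ x, ‖x‖ = R → dirDeriv x v x = v x) (hy : ‖y‖ = R) (hyz : ⟪y, z⟫ = 0) :
    dirDeriv y (dirDeriv z (dirDeriv z v)) y
      = dirDeriv y (dirDeriv y v) y / R ^ 2 * ‖z‖ ^ 2 - dirDeriv z (dirDeriv z v) y := by
  subst hy
  have := (dirDeriv_of_sphere (contDiff_legendre hv) (norm_pos_iff.1 hR)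
    (fun x hx => sub_eq_zero.2 (hrobin x hx)) hyz).2
  rw [dirDeriv_legendre hv, dirDeriv_radial (contDiff_dirDeriv hv z), dirDeriv_legendre hv] at this
  field_simp
  linarith

theorem dirDeriv_corrector_of_robin [FiniteDimensional ℝ E] (hv : ContDiff ℝ ∞ v) (hR : 0 < R)
    (hrobin : ∀ x, ‖x‖ = R → dirDeriv x v x = v x) (hy : ‖y‖ = R) :
    dirDeriv y (corrector R v) y = -2 * v y ^ 2 / R ^ 2 := by
  let b := stdOrthonormalBasis ℝ E
  set c := dirDeriv y (dirDeriv y v) y / R ^ 2 with hc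
  have hgrad (k) : dirDeriv y (dirDeriv (b k) v) y = c * ⟪b k, y⟫ := by
    rw [dirDeriv_comm (contDiff_infty.1 hv 2), real_inner_comm]
    exact dirDeriv_dirDeriv_radial_of_robin hv hR hrobin hy (b k)
  have hjet := ((HasTwoJetAt.sum Finset.univ fun k _ =>
      (hasTwoJetAt_comp_add_smul (contDiff_dirDeriv hv (b k)) y y).mul
        (hasTwoJetAt_comp_add_smul (contDiff_dirDeriv hv (b k)) y y)).const_mul (1 / 2)).sub
    (((hasTwoJetAt_comp_add_smul hv y y).mul
      (hasTwoJetAt_comp_add_smul (contDiff_dirDeriv_self hv) y y)).const_mul (1 / R ^ 2))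
  have := (hasTwoJetAt_comp_add_smul (contDiff_corrector hv R) y y).hasDerivAt.unique
    (by simpa only [corrector, gradSq_eq_sum b] using hjet.hasDerivAt)
  have hsum : ∑ k, (dirDeriv y (dirDeriv (b k) v) y * dirDeriv (b k) v y
      + dirDeriv (b k) v y * dirDeriv y (dirDeriv (b k) v) y) = 2 * (c * v y) := by
    rw [← hrobin y hy, dirDeriv_eq_sum b y v y, Finset.mul_sum, Finset.mul_sum]
    exact Finset.sum_congr rfl fun k _ => by rw [hgrad]; ring
  have hradial : dirDeriv y (dirDeriv y v) y = c * R ^ 2 := by rw [hc]; field_simp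
  rw [this, hsum, dirDeriv_radial hv, hrobin y hy, hradial]
  field_simp
  ring

end Sphere

theorem IsHessianEigenbasis.dirDeriv_dirDeriv_self_le {ι : Type*} [Fintype ι]
    {b : OrthonormalBasis ι ℝ E} {l : ι → ℝ} {v : E → ℝ} {y : E} {c : ℝ}
    (h : IsHessianEigenbasis b l v y) (hv : ContDiff ℝ ∞ v) (hl : ∀ i, l i ≤ c) (e : E) :
    dirDeriv e (dirDeriv e v) y ≤ c * ‖e‖ ^ 2 := by
  rw [dirDeriv_eq_sum b e, ← b.sum_sq_norm_inner_right, Finset.mul_sum]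
  refine Finset.sum_le_sum fun i _ => ?_
  rw [dirDeriv_comm (contDiff_infty.1 hv 2), h, Real.norm_eq_abs, sq_abs]
  nlinarith [mul_le_mul_of_nonneg_right (hl i) (sq_nonneg ⟪b i, e⟫)]

theorem IsHessianEigenbasis.dirDeriv_dirDeriv_self_sub_smul_of_robin {ι : Type*} [Fintype ι]
    {b : OrthonormalBasis ι ℝ E} {l : ι → ℝ} {v : E → ℝ} {y : E} {R t : ℝ} {m : ι}
    (h : IsHessianEigenbasis b l v y) (hv : ContDiff ℝ ∞ v) (hR : 0 < R)
    (hrobin : ∀ x, ‖x‖ = R → dirDeriv x v x = v x) (hy : ‖y‖ = R)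
    (hyt : ⟪y, b m - t • y⟫ = 0) :
    dirDeriv (b m - t • y) (dirDeriv (b m - t • y) v) y = l m * ‖b m - t • y‖ ^ 2 := by
  set e := b m - t • y with he
  have hnorm : ‖e‖ ^ 2 = ⟪b m, e⟫ := by
    conv_lhs => rw [← real_inner_self_eq_norm_sq, he, inner_sub_left, ← he]
    rw [inner_smul_left, hyt, mul_zero, sub_zero]
  have hexpand : dirDeriv e (dirDeriv e v) y
      = dirDeriv e (dirDeriv (b m) v) y - t * dirDeriv e (dirDeriv y v) y := by
    simp only [_root_.dirDeriv_dirDeriv (contDiff_infty.1 hv 2)]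
    rw [← smul_eq_mul, ← map_smul, ← map_sub]
  rw [hexpand, h, dirDeriv_dirDeriv_radial_of_robin hv hR hrobin hy e, hyt, hnorm, mul_zero,
    mul_zero, sub_zero]

theorem norm_log_le {x r s : ℝ} (hx : 0 < x) (hr : ‖x‖ ≤ r) (hs : ‖x⁻¹‖ ≤ s) :
    ‖Real.log x‖ ≤ r + s := by
  have hlog := Real.log_le_self hx.le
  have hlog_inv := Real.log_le_self (inv_pos.2 hx).le
  rw [Real.log_inv] at hlog_inv
  rw [Real.norm_of_nonneg hx.le] at hr
  rw [Real.norm_of_nonneg (inv_pos.2 hx).le] at hs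
  exact abs_le.2 ⟨by linarith [inv_pos.2 hx], by linarith [inv_pos.2 hx]⟩

theorem le_exp_of_sum_log_le {ι : Type*} [Fintype ι] {l : ι → ℝ} {U Q : ℝ} (hl : ∀ i, 0 < l i)
    (hsum : ∑ i, Real.log (l i) ≤ U) (hQ : ∀ i, (l i)⁻¹ ≤ Q) (m : ι) :
    l m ≤ Real.exp (U + (Fintype.card ι - 1 : ℕ) * Real.log Q) := by
  classical
  rw [← Real.log_le_iff_le_exp (hl m)]
  have hothers : (Finset.univ.erase m).card • -Real.log Q
      ≤ ∑ i ∈ Finset.univ.erase m, Real.log (l i) :=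
    Finset.card_nsmul_le_sum _ _ _ fun i _ => by
      have := Real.log_le_log (inv_pos.2 (hl i)) (hQ i)
      rw [Real.log_inv] at this
      linarith
  rw [Finset.card_erase_of_mem (Finset.mem_univ m), Finset.card_univ, nsmul_eq_mul] at hothers
  linarith [Finset.add_sum_erase Finset.univ (fun i => Real.log (l i)) (Finset.mem_univ m)]

theorem AprioriBounds.exists_norm_log_rhs_le (R N α β : ℝ) :
    ∃ U, ∀ {n : ℕ} {v F : E → ℝ}, RobinMongeAmpere n R α β v F → AprioriBounds R N v F →
      ∀ {y : E}, ‖y‖ ≤ R →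
      ‖Real.log (F y) + α * Real.log (v y) + β * Real.log (positionSq v y)‖ ≤ U :=
  ⟨_, fun H A y hy => norm_add_le_of_le (norm_add_le_of_le
    (norm_log_le (H.source_pos y hy) (A.source_bound.norm_le y hy) (A.norm_inv_source_le y hy))
    (norm_mul_le_of_le le_rfl
      (norm_log_le (H.pos y hy) (A.norm_le y hy) (A.norm_inv_le y hy))))
    (norm_mul_le_of_le le_rfl (norm_log_le (H.positionSq_pos y hy)
      (norm_add_le_of_le
        (norm_sq_le_of_le ((norm_norm (fderiv ℝ _ y)).trans_le (A.norm_fderiv_le y hy)))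
        (norm_sq_le_of_le (A.norm_legendre_le hy)))
      (A.norm_inv_positionSq_le y hy)))⟩

namespace RobinMongeAmpere

variable {n : ℕ} {R N α β B a : ℝ} {v F : E → ℝ} {b : OrthonormalBasis (Fin n) ℝ E}
  {l : Fin n → ℝ} {y e : E} {m : Fin n}

theorem dirDeriv_self_dirDeriv_dirDeriv_pos [FiniteDimensional ℝ E]
    (H : RobinMongeAmpere n R α β v F) (hy : ‖y‖ = R) (he : e ≠ 0) (hB : 0 < B) (ha : 0 ≤ a)
    (hmax : ∀ z, ‖z‖ ≤ R → testFunction R B a v z e ≤ testFunction R B a v y e) :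
    0 < dirDeriv y (dirDeriv e (dirDeriv e v)) y := by
  have hv := H.contDiff
  have hpos := H.pos y hy.le
  have hhess := H.hessian_pos y hy.le e he
  have hjet := ((((hasTwoJetAt_comp_add_smul
    (contDiff_dirDeriv (contDiff_dirDeriv hv e) e) y y).log hhess.ne').add
    ((hasTwoJetAt_comp_add_smul (contDiff_corrector hv R) y y).const_mul B)).sub
    (((hasTwoJetAt_comp_add_smul hv y y).log hpos.ne').const_mul a)).hasDerivAt
  have hmaxOn : IsMaxOn (fun s : ℝ => testFunction R B a v (y + s • y) e) (Icc (-1) 0) 0 := by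
    intro s hs
    have hs' : ‖y + s • y‖ ≤ R := by
      rw [show y + s • y = (1 + s) • y by module, norm_smul, hy,
        Real.norm_of_nonneg (by linarith [hs.1])]
      exact mul_le_of_le_one_left H.radius_pos.le (by linarith [hs.2])
    simpa using hmax _ hs'
  have hnonneg := hmaxOn.localize.hasFDerivWithinAt_nonpos
    (show HasFDerivWithinAt _ _ _ _ from hjet.hasFDerivAt.hasFDerivWithinAt)
    (mem_posTangentConeAt_of_segment_subset (y := -1) (by
      rw [zero_add, segment_symm, segment_eq_Icc (by norm_num)]))
  rw [dirDeriv_corrector_of_robin hv H.radius_pos H.robin hy, H.robin y hy, div_self hpos.ne']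
    at hnonneg
  simp only [ContinuousLinearMap.toSpanSingleton_apply, smul_eq_mul] at hnonneg
  have hK : 0 < B * (2 * v y ^ 2 / R ^ 2) := by
    have := H.radius_pos
    positivity
  refine (div_pos_iff_of_pos_right hhess).1 ?_
  linarith [show B * (-2 * v y ^ 2 / R ^ 2) = -(B * (2 * v y ^ 2 / R ^ 2)) by ring]

/-- Otherwise the part of `b m` tangential to the sphere is again a maximal direction, and there
the Robin condition makes the radial derivative of the Hessian non-positive. -/
theorem exists_eq_smul_of_isMax [FiniteDimensional ℝ E] (H : RobinMongeAmpere n R α β v F)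
    (h : IsHessianEigenbasis b l v y) (hy : ‖y‖ = R) (hB : 0 < B) (ha : 0 ≤ a)
    (hl : ∀ i, l i ≤ l m) (hmax : ∀ z, ‖z‖ ≤ R → ∀ e, ‖e‖ = 1 →
      testFunction R B a v z e ≤ testFunction R B a v y (b m)) :
    ∃ σ : ℝ, y = σ • b m := by
  have hv := H.contDiff
  have hR := H.radius_pos
  let t := ⟪y, b m⟫ / R ^ 2
  let e := b m - t • y
  have hye : ⟪y, e⟫ = 0 := by
    rw [inner_sub_right, inner_smul_right, real_inner_self_eq_norm_sq, hy,
      div_mul_cancel₀ _ (by positivity), sub_self]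
  rcases eq_or_ne e 0 with he | he
  · have hbm : b m = t • y := sub_eq_zero.1 he
    have ht : t ≠ 0 := fun ht => b.orthonormal.ne_zero m (by rw [hbm, ht, zero_smul])
    exact ⟨t⁻¹, by rw [hbm, inv_smul_smul₀ ht]⟩
  exfalso
  have hhess := h.dirDeriv_dirDeriv_self_sub_smul_of_robin hv hR H.robin hy hye
  let u := ‖e‖⁻¹ • e
  have hu : ‖u‖ = 1 := by
    rw [norm_smul, norm_inv, norm_norm, inv_mul_cancel₀ (norm_ne_zero_iff.2 he)]
  have huu : dirDeriv u (dirDeriv u v) y = l m := by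
    have := norm_pos_iff.2 he
    rw [dirDeriv_dirDeriv_smul (contDiff_infty.1 hv 2), hhess, mul_comm, mul_assoc, ← mul_pow,
      mul_inv_cancel₀ this.ne', one_pow, mul_one]
  have hpos := H.dirDeriv_self_dirDeriv_dirDeriv_pos hy (norm_ne_zero_iff.1 (hu ▸ one_ne_zero))
    hB ha fun z hz => (hmax z hz u hu).trans_eq (by
      rw [testFunction, testFunction, huu, h.dirDeriv_dirDeriv_self])
  rw [dirDeriv_dirDeriv_dirDeriv_of_robin hv hR H.robin hy
    (by rw [inner_smul_right, hye, mul_zero]), hu, huu] at hpos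
  have hle := h.dirDeriv_dirDeriv_self_le hv hl y
  rw [hy, ← div_le_iff₀ (by positivity)] at hle
  linarith

theorem eigenvalue_sub_le_of_eq_smul [FiniteDimensional ℝ E] (H : RobinMongeAmpere n R α β v F)
    (h : IsHessianEigenbasis b l v y) (hy : ‖y‖ = R) (hB : 0 < B) (ha : 0 ≤ a)
    (hmax : ∀ z, ‖z‖ ≤ R → testFunction R B a v z (b m) ≤ testFunction R B a v y (b m))
    {σ : ℝ} (hσ : y = σ • b m) (i : Fin n) :
    l m - l i ≤ σ * thirdDeriv b v y m i i := by
  have hthird : σ * thirdDeriv b v y m i i = dirDeriv y (dirDeriv (b i) (dirDeriv (b i) v)) y := by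
    rw [thirdDeriv, ← dirDeriv_smul, ← hσ]
  rw [hthird]
  rcases eq_or_ne i m with rfl | hi
  · rw [sub_self]
    exact (H.dirDeriv_self_dirDeriv_dirDeriv_pos hy (b.orthonormal.ne_zero i) hB ha hmax).le
  have hR : R ^ 2 = σ ^ 2 := by
    rw [← hy, hσ, norm_smul, b.norm_eq_one, mul_one, Real.norm_eq_abs, sq_abs]
  have hσ0 : σ ^ 2 ≠ 0 := hR ▸ (pow_pos H.radius_pos 2).ne'
  have hradial : dirDeriv y (dirDeriv y v) y = σ ^ 2 * l m := by
    have := dirDeriv_dirDeriv_smul (contDiff_infty.1 H.contDiff 2) σ (b m) y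
    rwa [← hσ, h.dirDeriv_dirDeriv_self] at this
  rw [dirDeriv_dirDeriv_dirDeriv_of_robin H.contDiff H.radius_pos H.robin hy (by
    rw [hσ, inner_smul_left, b.inner_eq_zero hi.symm, mul_zero]), h.dirDeriv_dirDeriv_self,
    b.norm_eq_one, hradial, hR, mul_div_cancel_left₀ _ hσ0, one_pow, mul_one]

theorem sum_thirdDeriv_div_of_eq_smul (H : RobinMongeAmpere n R α β v F)
    (h : IsHessianEigenbasis b l v y) (hy : ‖y‖ = R) {σ : ℝ} (hσ : y = σ • b m) :
    ∑ i, thirdDeriv b v y m i i / l i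
      = dirDeriv (b m) F y / F y + α * (dirDeriv (b m) v y / v y)
        + β * (2 * l m * positionGrad v y (b m) / positionSq v y) := by
  have hσR : |σ| = R := by rw [← hy, hσ, norm_smul, b.norm_eq_one, mul_one, Real.norm_eq_abs]
  have hσ0 : 0 ≠ -σ := fun h0 => H.radius_pos.ne (by rw [← hσR, ← abs_neg, ← h0, abs_zero])
  have hmem : ∀ s ∈ uIcc 0 (-σ), ‖y + s • b m‖ ≤ R := fun s hs => by
    rw [show y + s • b m = (σ + s) • b m by rw [add_smul, ← hσ], norm_smul, b.norm_eq_one,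
      mul_one, Real.norm_eq_abs, ← hσR]
    have := abs_sub_right_of_mem_uIcc hs
    rwa [← neg_add', abs_neg, sub_zero, abs_neg] at this
  have hlhs := (h.hasTwoJetAt_log_det H.contDiff
    (fun i => (H.eigenvalue_pos h hy.le i).ne') m).hasDerivAt.hasDerivWithinAt (s := uIcc 0 (-σ))
  have hrhs := (H.hasTwoJetAt_rhs h hy.le m).hasDerivAt.hasDerivWithinAt (s := uIcc 0 (-σ))
  exact (uniqueDiffOn_uIcc hσ0 0 left_mem_uIcc).eq_deriv _ hlhs (hrhs.congr_of_mem
    (fun s hs => H.log_det_eq _ (hmem s hs) b) left_mem_uIcc)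

theorem sum_log_eigenvalue_eq (H : RobinMongeAmpere n R α β v F) (h : IsHessianEigenbasis b l v y)
    (hy : ‖y‖ ≤ R) : ∑ i, Real.log (l i)
      = Real.log (F y) + α * Real.log (v y) + β * Real.log (positionSq v y) := by
  rw [← H.log_det_eq y hy b, ← Real.log_prod fun i _ => (H.eigenvalue_pos h hy i).ne',
    ← Matrix.det_diagonal]
  congr 2
  ext i j
  rw [← Matrix.diagonal_transpose]
  exact (h.dirDeriv_dirDeriv i j).symm

end RobinMongeAmpere

theorem AprioriBounds.exists_norm_logDeriv_rhs_le (R N α β : ℝ) :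
    ∃ D, ∀ {v F : E → ℝ}, AprioriBounds R N v F → ∀ {y e : E}, ‖y‖ ≤ R → ‖e‖ = 1 →
      ∀ {x : ℝ}, 1 ≤ x → ‖(dirDeriv e F y / F y + α * (dirDeriv e v y / v y)) / x
        + β * (2 * positionGrad v y e / positionSq v y)‖ ≤ D :=
  ⟨_, fun A y e hy he x hx => norm_add_le_of_le
    (norm_div_le_mul_of_le (norm_add_le_of_le
      (norm_div_le_mul_of_le (A.source_bound.norm_dirDeriv_le y hy e he)
        (A.norm_inv_source_le y hy))
      (norm_mul_le_of_le le_rfl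
        (norm_div_le_mul_of_le (A.norm_dirDeriv_le hy he) (A.norm_inv_le y hy))))
      (show ‖x⁻¹‖ ≤ 1 by
        rw [norm_inv, Real.norm_of_nonneg (zero_le_one.trans hx)]
        exact inv_le_one_of_one_le₀ hx))
    (norm_mul_le_of_le le_rfl (norm_div_le_mul_of_le
      (norm_mul_le_of_le le_rfl (A.norm_positionGrad_le hy he))
      (A.norm_inv_positionSq_le y hy)))⟩

theorem RobinMongeAmpere.exists_boundary_bound [FiniteDimensional ℝ E] (n : ℕ) (R N α β : ℝ) :
    ∃ C, ∀ {v F : E → ℝ}, RobinMongeAmpere n R α β v F → AprioriBounds R N v F →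
      ∀ {b : OrthonormalBasis (Fin n) ℝ E} {l : Fin n → ℝ} {y : E},
        IsHessianEigenbasis b l v y → ‖y‖ = R → ∀ {B a : ℝ}, 0 < B → 0 ≤ a → ∀ {m : Fin n},
        (∀ i, l i ≤ l m) → (∀ z, ‖z‖ ≤ R → ∀ e, ‖e‖ = 1 →
          testFunction R B a v z e ≤ testFunction R B a v y (b m)) →
        1 ≤ l m → l m ≤ C := by
  obtain ⟨U, hU⟩ := AprioriBounds.exists_norm_log_rhs_le (E := E) R N α β
  obtain ⟨D, hD⟩ := AprioriBounds.exists_norm_logDeriv_rhs_le (E := E) R N α β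
  refine ⟨Real.exp (U + (n - 1 : ℕ) * Real.log (1 + R * D)),
    fun {v F} H A {b l y} h hy {B a} hB ha {m} hl hmax hlm => ?_⟩
  have hpos := H.eigenvalue_pos h hy.le
  obtain ⟨σ, hσ⟩ := H.exists_eq_smul_of_isMax h hy hB ha hl hmax
  have hσR : |σ| = R := by rw [← hy, hσ, norm_smul, b.norm_eq_one, mul_one, Real.norm_eq_abs]
  have hthird := H.eigenvalue_sub_le_of_eq_smul h hy hB ha
    (fun z hz => hmax z hz _ (b.norm_eq_one m)) hσ
  have hquot (i : Fin n) : (l m - l i) / l i ≤ l m * (R * D) := by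
    have hnonneg (j : Fin n) : 0 ≤ σ * (thirdDeriv b v y m j j / l j) := by
      rw [← mul_div_assoc]
      exact div_nonneg ((sub_nonneg.2 (hl j)).trans (hthird j)) (hpos j).le
    calc (l m - l i) / l i ≤ σ * (thirdDeriv b v y m i i / l i) := by
          rw [← mul_div_assoc]
          exact div_le_div_of_nonneg_right (hthird i) (hpos i).le
      _ ≤ ∑ j, σ * (thirdDeriv b v y m j j / l j) :=
          Finset.single_le_sum (fun j _ => hnonneg j) (Finset.mem_univ i)
      _ = l m * (σ * ((dirDeriv (b m) F y / F y + α * (dirDeriv (b m) v y / v y)) / l m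
            + β * (2 * positionGrad v y (b m) / positionSq v y))) := by
          rw [← Finset.mul_sum, H.sum_thirdDeriv_div_of_eq_smul h hy hσ]
          have := (hpos m).ne'
          field_simp
      _ ≤ l m * (R * D) := by
          refine mul_le_mul_of_nonneg_left ((le_abs_self _).trans ?_) (hpos m).le
          rw [abs_mul, hσR]
          exact mul_le_mul_of_nonneg_left (hD A hy.le (b.norm_eq_one m) hlm) H.radius_pos.le
  have hQ (i : Fin n) : (l i)⁻¹ ≤ 1 + R * D := by
    have := hquot i
    have hlinv : (l m)⁻¹ ≤ 1 := inv_le_one_of_one_le₀ hlm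
    rw [sub_div, div_self (hpos i).ne', sub_le_iff_le_add, div_eq_mul_inv,
      ← le_inv_mul_iff₀ (hpos m), mul_add, inv_mul_cancel_left₀ (hpos m).ne', mul_one] at this
    linarith
  have := le_exp_of_sum_log_le hpos
    ((H.sum_log_eigenvalue_eq h hy.le).trans_le ((le_abs_self _).trans (hU H A hy.le))) hQ m
  rwa [Fintype.card_fin] at this

section FlatEstimate

variable {E : Type*} [NormedAddCommGroup E] [InnerProductSpace ℝ E]
  {n : ℕ} {R N α β B a : ℝ} {v F : E → ℝ}

theorem AprioriBounds.exists_norm_testFunction_sub_log_le (R N B a α β : ℝ) :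
    ∃ K, ∀ {n : ℕ} {v F : E → ℝ}, RobinMongeAmpere n R α β v F → AprioriBounds R N v F →
      ∀ {y e : E}, ‖y‖ ≤ R →
      ‖testFunction R B a v y e - Real.log (dirDeriv e (dirDeriv e v) y)‖ ≤ K := by
  apply Exists.intro
  case h =>
    intro n v F H A y e hy
    rw [show testFunction R B a v y e - Real.log (dirDeriv e (dirDeriv e v) y)
      = B * corrector R v y - a * Real.log (v y) by rw [testFunction]; ring]
    have hgrad := A.norm_fderiv_le y hy
    rw [← norm_norm] at hgrad
    exact norm_sub_le_of_le
      (norm_mul_le_of_le le_rfl (norm_sub_le_of_le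
        (norm_mul_le_of_le le_rfl (norm_sq_le_of_le hgrad))
        (norm_mul_le_of_le le_rfl (norm_mul_le_of_le (A.norm_le y hy) (A.norm_radial_le hy)))))
      (norm_mul_le_of_le le_rfl
        (norm_log_le (H.pos y hy) (A.norm_le y hy) (A.norm_inv_le y hy)))

variable [FiniteDimensional ℝ E]

namespace RobinMongeAmpere

theorem continuousOn_testFunction (H : RobinMongeAmpere n R α β v F) :
    ContinuousOn (fun p : E × E => testFunction R B a v p.1 p.2)
      (Metric.closedBall 0 R ×ˢ Metric.sphere 0 1) := by
  have hv := H.contDiff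
  have hhess : Continuous fun p : E × E => dirDeriv p.2 (dirDeriv p.2 v) p.1 := by
    have hfderiv : Continuous (fderiv ℝ (fderiv ℝ v)) :=
      (hv.fderiv_right (m := ∞) le_rfl).continuous_fderiv (by simp)
    simp only [dirDeriv_dirDeriv (contDiff_infty.1 hv 2)]
    fun_prop
  have hcorrector := (contDiff_corrector hv R).continuous
  refine ((hhess.continuousOn.log ?_).add (by fun_prop)).sub
    (continuousOn_const.mul ((hv.continuous.comp continuous_fst).continuousOn.log ?_))
  · rintro ⟨z, e⟩ ⟨hz, he⟩
    exact (H.hessian_pos z (mem_closedBall_zero_iff.1 hz) e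
      (norm_ne_zero_iff.1 (mem_sphere_zero_iff_norm.1 he ▸ one_ne_zero))).ne'
  · rintro ⟨z, e⟩ ⟨hz, -⟩
    exact (H.pos z (mem_closedBall_zero_iff.1 hz)).ne'

theorem exists_isMax_testFunction (H : RobinMongeAmpere n R α β v F) [Nontrivial E]
    (hn : Module.finrank ℝ E = n) :
    ∃ (b : OrthonormalBasis (Fin n) ℝ E) (l : Fin n → ℝ) (y : E) (m : Fin n),
      ‖y‖ ≤ R ∧ IsHessianEigenbasis b l v y ∧ (∀ i, l i ≤ l m) ∧ ∀ z, ‖z‖ ≤ R → ∀ e, ‖e‖ = 1 →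
        testFunction R B a v z e ≤ testFunction R B a v y (b m) := by
  obtain ⟨u, hu⟩ := exists_norm_eq E zero_le_one
  obtain ⟨⟨y, e⟩, ⟨hy, he⟩, hmax⟩ :=
    ((isCompact_closedBall (0 : E) R).prod (isCompact_sphere 0 1)).exists_isMaxOn
      ⟨(0, u), Metric.mem_closedBall_self H.radius_pos.le, mem_sphere_zero_iff_norm.2 hu⟩
      (H.continuousOn_testFunction (B := B) (a := a))
  rw [mem_closedBall_zero_iff] at hy
  rw [mem_sphere_zero_iff_norm] at he
  obtain ⟨b, l, h⟩ := exists_isHessianEigenbasis hn (contDiff_infty.1 H.contDiff 2) y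
  have : NeZero n := ⟨hn ▸ Module.finrank_pos.ne'⟩
  obtain ⟨m, hm⟩ := Finite.exists_max l
  refine ⟨b, l, y, m, hy, h, hm, fun z hz d hd => ?_⟩
  have hle := h.dirDeriv_dirDeriv_self_le H.contDiff hm e
  rw [he, one_pow, mul_one] at hle
  have hlog := Real.log_le_log (H.hessian_pos y hy e (norm_ne_zero_iff.1 (he ▸ one_ne_zero))) hle
  refine (hmax (Set.mk_mem_prod (mem_closedBall_zero_iff.2 hz)
    (mem_sphere_zero_iff_norm.2 hd))).trans ?_
  simp only [testFunction, h.dirDeriv_dirDeriv_self]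
  linarith

end RobinMongeAmpere

theorem RobinMongeAmpere.exists_hessian_bound (hn : Module.finrank ℝ E = n) (R N α β : ℝ) :
    ∃ C, ∀ {v F : E → ℝ}, RobinMongeAmpere n R α β v F → AprioriBounds R N v F →
      ∀ y e, ‖y‖ ≤ R → ‖e‖ = 1 → dirDeriv e (dirDeriv e v) y ≤ C := by
  obtain ⟨B, hB, a, ha, Ci, hCi⟩ := RobinMongeAmpere.exists_interior_bound (E := E) n R N α β
  obtain ⟨Cb, hCb⟩ := RobinMongeAmpere.exists_boundary_bound (E := E) n R N α β
  obtain ⟨K, hK⟩ := AprioriBounds.exists_norm_testFunction_sub_log_le (E := E) R N B a α β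
  refine ⟨Real.exp (Real.log (max 1 (max Ci Cb)) + K + K), fun {v F} H A y e hy he => ?_⟩
  have he0 : e ≠ 0 := norm_ne_zero_iff.1 (he ▸ one_ne_zero)
  have : Nontrivial E := nontrivial_of_ne e 0 he0
  obtain ⟨b, l, x, m, hx, h, hm, hmax⟩ := H.exists_isMax_testFunction (B := B) (a := a) hn
  have hlm : l m ≤ max 1 (max Ci Cb) := by
    rcases le_total (l m) 1 with h1 | h1
    · exact le_max_of_le_left h1
    refine le_max_of_le_right ?_
    rcases hx.lt_or_eq with hx | hx
    · exact le_max_of_le_left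
        (hCi H A h hx (fun z hz => hmax z hz _ (b.norm_eq_one m)) h1)
    · exact le_max_of_le_right (hCb H A h hx hB ha hm hmax h1)
  rw [← Real.log_le_iff_le_exp (H.hessian_pos y hy e he0)]
  have hlog := Real.log_le_log (H.eigenvalue_pos h hx m) hlm
  have hy' := neg_le_of_abs_le (hK H A (e := e) hy)
  have hx' := le_of_abs_le (hK H A (e := b m) hx)
  rw [h.dirDeriv_dirDeriv_self] at hx'
  linarith [hmax y hy e he]

end FlatEstimate

section RadialCalculus

variable {V : Type*} [NormedAddCommGroup V] [InnerProductSpace ℝ V] {Z : V}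

theorem hasFDerivAt_norm_of_ne_zero (hZ : Z ≠ 0) :
    HasFDerivAt (fun Z : V => ‖Z‖) (innerSL ℝ (NormedSpace.normalize Z)) Z := by
  have h := (hasStrictFDerivAt_norm_sq Z).hasFDerivAt.sqrt (by positivity)
  simp only [Real.sqrt_sq (norm_nonneg _)] at h
  refine h.congr_fderiv (ContinuousLinearMap.ext fun W => ?_)
  simp [NormedSpace.normalize]
  ring

theorem hasFDerivAt_normalize (hZ : Z ≠ 0) :
    HasFDerivAt NormedSpace.normalize (‖Z‖⁻¹ • (ContinuousLinearMap.id ℝ V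
      - (innerSL ℝ (NormedSpace.normalize Z)).smulRight (NormedSpace.normalize Z))) Z := by
  have h := ((hasDerivAt_inv (norm_ne_zero_iff.2 hZ)).comp_hasFDerivAt Z
    (hasFDerivAt_norm_of_ne_zero hZ)).smul (hasFDerivAt_id Z)
  refine h.congr_fderiv (ContinuousLinearMap.ext fun W => ?_)
  simp [NormedSpace.normalize]
  module

theorem contDiff_gradient [CompleteSpace V] {g : V → ℝ} {k m : WithTop ℕ∞}
    (hg : ContDiff ℝ m g) (hkm : k + 1 ≤ m) : ContDiff ℝ k (gradient g) :=
  (InnerProductSpace.toDual ℝ V).symm.toContinuousLinearEquiv.contDiff.comp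
    (hg.fderiv_right hkm)

end RadialCalculus

section HyperplaneDeterminant

variable {V : Type*} [NormedAddCommGroup V] [InnerProductSpace ℝ V] {ι : Type*} [Fintype ι]
  {e x : V}

theorem sum_inner_sq_add_inner_sq (he : ‖e‖ = 1) (b : OrthonormalBasis ι ℝ (ℝ ∙ e)ᗮ) (x : V) :
    ∑ i, ⟪x, (b i : V)⟫ ^ 2 + ⟪x, e⟫ ^ 2 = ‖x‖ ^ 2 := by
  have horth : ∑ i, ⟪x, (b i : V)⟫ ^ 2 = ‖(ℝ ∙ e)ᗮ.orthogonalProjectionOnto x‖ ^ 2 := by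
    rw [← b.sum_sq_norm_inner_left]
    exact Finset.sum_congr rfl fun i _ => by
      rw [Submodule.inner_orthogonalProjectionOnto_eq_of_mem_right, Real.norm_eq_abs, sq_abs]
  have hspan : ⟪x, e⟫ ^ 2 = ‖(ℝ ∙ e).orthogonalProjectionOnto x‖ ^ 2 := by
    rw [← Submodule.norm_coe, ← Submodule.starProjection_apply,
      Submodule.starProjection_unit_singleton ℝ he, norm_smul, he, mul_one, Real.norm_eq_abs,
      sq_abs, real_inner_comm]
  rw [horth, hspan, add_comm, ← Submodule.norm_sq_eq_add_norm_sq_projection]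

theorem det_gram_sumElim_unit [DecidableEq ι] (hx : ‖x‖ = 1) (he : ‖e‖ = 1)
    (b : OrthonormalBasis ι ℝ (ℝ ∙ e)ᗮ) :
    (Matrix.gram ℝ (Sum.elim (fun i => (b i : V)) fun _ : Unit => x)).det = ⟪x, e⟫ ^ 2 := by
  have hb (i j : ι) : ⟪(b i : V), (b j : V)⟫ = if i = j then 1 else 0 :=
    orthonormal_iff_ite.1 b.orthonormal i j
  have hblocks : Matrix.gram ℝ (Sum.elim (fun i => (b i : V)) fun _ : Unit => x) =
      Matrix.fromBlocks 1 (Matrix.replicateCol Unit fun i => ⟪x, (b i : V)⟫)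
        (Matrix.replicateRow Unit fun i => ⟪x, (b i : V)⟫) 1 := by
    ext (i | i) (j | j) <;>
      simp [Matrix.gram_apply, hb, Matrix.one_apply, hx, real_inner_comm]
  rw [hblocks, Matrix.det_fromBlocks_one₁₁, Matrix.det_unique]
  have := sum_inner_sq_add_inner_sq he b x
  simp only [hx, Matrix.sub_apply, Matrix.one_apply_eq, Matrix.mul_apply,
    Matrix.replicateRow_apply, Matrix.replicateCol_apply, ← sq] at this ⊢
  linarith

variable [FiniteDimensional ℝ V]

theorem det_inner_map [DecidableEq ι] (hι : Fintype.card ι = Module.finrank ℝ V) (M : V →ₗ[ℝ] V)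
    (c : ι → V) :
    (Matrix.of fun i j => ⟪c i, M (c j)⟫).det = LinearMap.det M * (Matrix.gram ℝ c).det := by
  let o : OrthonormalBasis ι ℝ V :=
    (stdOrthonormalBasis ℝ V).reindex (Fintype.equivOfCardEq (by simp [hι]))
  let coords (w : ι → V) : Matrix ι ι ℝ := Matrix.of fun k i => ⟪o k, w i⟫
  have hinner (w : ι → V) :
      (Matrix.of fun i j => ⟪c i, w j⟫) = (coords c).transpose * coords w := by
    ext i j
    simp only [coords, Matrix.mul_apply, Matrix.transpose_apply, Matrix.of_apply]
    rw [← o.sum_inner_mul_inner]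
    exact Finset.sum_congr rfl fun k _ => by rw [real_inner_comm]
  have hmap : coords (M ∘ c) = LinearMap.toMatrix o.toBasis o.toBasis M * coords c := by
    ext k j
    have := congrFun (LinearMap.toMatrix_mulVec_repr o.toBasis o.toBasis M (c j)) k
    simpa [coords, Matrix.mul_apply, Matrix.mulVec, dotProduct, o.repr_apply_apply] using this.symm
  have hgram : Matrix.gram ℝ c = (coords c).transpose * coords c := hinner c
  rw [hgram, show (Matrix.of fun i j => ⟪c i, M (c j)⟫) = _ from hinner (M ∘ c), hmap,
    Matrix.det_mul, Matrix.det_mul, Matrix.det_mul, LinearMap.det_toMatrix]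
  ring

theorem det_inner_orthogonal_singleton [DecidableEq ι] (hx : ‖x‖ = 1) (he : ‖e‖ = 1)
    (b : OrthonormalBasis ι ℝ (ℝ ∙ e)ᗮ) {Q : V →L[ℝ] V} (hQx : Q x = 0)
    (hxQ : ∀ w, ⟪x, Q w⟫ = 0) :
    (Matrix.of fun i j => ⟪(b i : V), Q (b j)⟫).det =
      LinearMap.det (Q + (innerSL ℝ x).smulRight x).toLinearMap * ⟪x, e⟫ ^ 2 := by
  have hcard : Fintype.card (ι ⊕ Unit) = Module.finrank ℝ V := by
    have he0 : e ≠ 0 := norm_ne_zero_iff.1 (by simp [he])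
    rw [Fintype.card_sum, Fintype.card_unit, ← Module.finrank_eq_card_basis b.toBasis, add_comm,
      ← (ℝ ∙ e).finrank_add_finrank_orthogonal, finrank_span_singleton he0]
  let M := (Q + (innerSL ℝ x).smulRight x).toLinearMap
  let c : ι ⊕ Unit → V := Sum.elim (fun i => (b i : V)) fun _ => x
  have hdet : (Matrix.of fun i j => ⟪c i, M (c j)⟫).det = LinearMap.det M * ⟪x, e⟫ ^ 2 := by
    rw [det_inner_map hcard, det_gram_sumElim_unit hx he b]
  have hblocks : (Matrix.of fun i j => ⟪c i, M (c j)⟫) = Matrix.fromBlocks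
        (Matrix.of fun i j => ⟪(b i : V), Q (b j)⟫ + ⟪x, (b i : V)⟫ * ⟪x, (b j : V)⟫)
        (Matrix.replicateCol Unit fun i => ⟪x, (b i : V)⟫)
        (Matrix.replicateRow Unit fun i => ⟪x, (b i : V)⟫) 1 := by
    ext (i | i) (j | j) <;>
      simp [c, M, inner_add_right, inner_smul_right, hQx, hxQ, hx, real_inner_comm, mul_comm]
  rw [← hdet, hblocks, Matrix.det_fromBlocks_one₂₂]
  congr 1
  ext i j
  simp [Matrix.mul_apply]

end HyperplaneDeterminant

section TangentProjection

variable {n : ℕ} {θ : ℝ} {ξ X : Euc n}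

theorem tproj_apply (ξ W : Euc n) :
    tproj n θ ξ W = W - ⟪sphNormal n θ ξ, W⟫ • sphNormal n θ ξ := by
  simp [tproj]

theorem inner_tproj_left_eq_right (ξ V W : Euc n) :
    ⟪tproj n θ ξ V, W⟫ = ⟪V, tproj n θ ξ W⟫ := by
  simp only [tproj_apply, inner_sub_left, inner_sub_right, real_inner_smul_left,
    real_inner_smul_right, real_inner_comm V (sphNormal n θ ξ)]
  ring

theorem isTangent_tproj (hξ : ‖sphNormal n θ ξ‖ = 1) (W : Euc n) :
    IsTangent n θ ξ (tproj n θ ξ W) := by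
  rw [IsTangent, tproj_apply, inner_sub_left, real_inner_smul_left, real_inner_self_eq_norm_sq,
    hξ, real_inner_comm]
  ring

theorem tproj_sphNormal (hξ : ‖sphNormal n θ ξ‖ = 1) : tproj n θ ξ (sphNormal n θ ξ) = 0 := by
  simp [tproj_apply, hξ]

theorem IsTangent.tproj_eq (hX : IsTangent n θ ξ X) : tproj n θ ξ X = X := by
  rw [tproj_apply, real_inner_comm, hX, zero_smul, sub_zero]

theorem norm_tproj_le (hξ : ‖sphNormal n θ ξ‖ = 1) (W : Euc n) : ‖tproj n θ ξ W‖ ≤ ‖W‖ := by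
  have h : ‖tproj n θ ξ W‖ ^ 2 ≤ ‖tproj n θ ξ W‖ * ‖W‖ := by
    rw [← real_inner_self_eq_norm_sq, inner_tproj_left_eq_right,
      (isTangent_tproj hξ W).tproj_eq, real_inner_comm]
    exact real_inner_le_norm _ _
  rcases (norm_nonneg (tproj n θ ξ W)).eq_or_lt with h0 | h0
  · exact h0 ▸ norm_nonneg W
  · exact le_of_mul_le_mul_left (sq ‖tproj n θ ξ W‖ ▸ h) h0

end TangentProjection

section SupportFunction

/-- The endomorphism `∇²g + gσ` of the tangent space at `ξ`, extended by zero to the normal line.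
For a support function `g` its eigenvalues on the tangent space are the principal radii of
curvature. -/
def radiiOp (n : ℕ) (θ : ℝ) (g : Euc n → ℝ) (ξ : Euc n) : Euc n →L[ℝ] Euc n :=
  thessOp n θ g ξ + g ξ • tproj n θ ξ

/-- The vector `g ν + ∇g`: the point with unit normal `ν(ξ)` on the hypersurface whose support
function is `g`. -/
def positionVec (n : ℕ) (θ : ℝ) (g : Euc n → ℝ) (ξ : Euc n) : Euc n :=
  g ξ • sphNormal n θ ξ + sgrad n θ g ξ

/-- The point of the sphere containing the cap at which the unit normal has the direction of `Z`. -/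
def capPoint (n : ℕ) (θ : ℝ) (Z : Euc n) : Euc n :=
  NormedSpace.normalize Z + Real.cos θ • eVec n

/-- The one-homogeneous extension to `ℝ^{n+1} ∖ {0}` of `g`, read as a function of the unit
normal. -/
def supportExt (n : ℕ) (θ : ℝ) (g : Euc n → ℝ) (Z : Euc n) : ℝ :=
  ‖Z‖ * g (capPoint n θ Z)

variable {n : ℕ} {θ : ℝ} {g : Euc n → ℝ} {ξ Z : Euc n}

theorem hessOp_eq_radiiOp_add (ξ : Euc n) :
    hessOp n θ g ξ = radiiOp n θ g ξ + (innerSL ℝ (sphNormal n θ ξ)).smulRight (sphNormal n θ ξ) :=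
  rfl

theorem inner_radiiOp (hξ : ‖sphNormal n θ ξ‖ = 1) (a e : Euc n) :
    ⟪radiiOp n θ g ξ a, e⟫ = shess n θ g ξ (tproj n θ ξ a) (tproj n θ ξ e)
      + g ξ * ⟪tproj n θ ξ a, tproj n θ ξ e⟫ := by
  have hP : ⟪tproj n θ ξ a, tproj n θ ξ e⟫ = ⟪tproj n θ ξ a, e⟫ := by
    rw [← inner_tproj_left_eq_right, (isTangent_tproj hξ a).tproj_eq]
  simp [radiiOp, thessOp, shess, inner_add_left, inner_sub_left, real_inner_smul_left, hP,
    inner_tproj_left_eq_right ξ (fderiv ℝ (gradient g) ξ _)]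

theorem radiiOp_sphNormal (hξ : ‖sphNormal n θ ξ‖ = 1) :
    radiiOp n θ g ξ (sphNormal n θ ξ) = 0 := by
  simp [radiiOp, thessOp, tproj_sphNormal hξ]

theorem inner_sphNormal_radiiOp (hξ : ‖sphNormal n θ ξ‖ = 1) (a : Euc n) :
    ⟪sphNormal n θ ξ, radiiOp n θ g ξ a⟫ = 0 := by
  rw [real_inner_comm, inner_radiiOp hξ, tproj_sphNormal hξ]
  simp [shess]

theorem inner_positionVec_sphNormal (hξ : ‖sphNormal n θ ξ‖ = 1) :
    ⟪positionVec n θ g ξ, sphNormal n θ ξ⟫ = g ξ := by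
  have htan : ⟪sgrad n θ g ξ, sphNormal n θ ξ⟫ = 0 := isTangent_tproj hξ _
  simp [positionVec, inner_add_left, real_inner_smul_left, htan, hξ]

theorem norm_positionVec_sq (hξ : ‖sphNormal n θ ξ‖ = 1) :
    ‖positionVec n θ g ξ‖ ^ 2 = g ξ ^ 2 + ‖sgrad n θ g ξ‖ ^ 2 := by
  have htan : ⟪sphNormal n θ ξ, sgrad n θ g ξ⟫ = 0 := by
    rw [real_inner_comm]
    exact isTangent_tproj hξ _
  simp [positionVec, norm_add_sq_real, norm_smul, real_inner_smul_left, htan, hξ]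

theorem sphNormal_capPoint (Z : Euc n) :
    sphNormal n θ (capPoint n θ Z) = NormedSpace.normalize Z := by
  simp [sphNormal, capPoint]

theorem norm_sphNormal_capPoint (hZ : Z ≠ 0) : ‖sphNormal n θ (capPoint n θ Z)‖ = 1 := by
  rw [sphNormal_capPoint, NormedSpace.norm_normalize hZ]

theorem hasFDerivAt_capPoint (hZ : Z ≠ 0) :
    HasFDerivAt (capPoint n θ) (‖Z‖⁻¹ • tproj n θ (capPoint n θ Z)) Z := by
  rw [tproj, sphNormal_capPoint]
  exact (hasFDerivAt_normalize hZ).add_const _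

theorem hasFDerivAt_supportExt (hg : Differentiable ℝ g) (hZ : Z ≠ 0) :
    HasFDerivAt (supportExt n θ g) (innerSL ℝ (positionVec n θ g (capPoint n θ Z))) Z := by
  have h := (hasFDerivAt_norm_of_ne_zero hZ).mul
    ((hg (capPoint n θ Z)).hasFDerivAt.comp Z (hasFDerivAt_capPoint hZ))
  refine h.congr_fderiv (ContinuousLinearMap.ext fun W => ?_)
  have hn := norm_ne_zero_iff.2 hZ
  simp [positionVec, sgrad, sphNormal_capPoint, inner_tproj_left_eq_right, inner_gradient_left]
  field_simp
  ring

theorem hasFDerivAt_positionVec_capPoint (hg : ContDiff ℝ 2 g) (hZ : Z ≠ 0) :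
    HasFDerivAt (fun Z => positionVec n θ g (capPoint n θ Z))
      (‖Z‖⁻¹ • radiiOp n θ g (capPoint n θ Z)) Z := by
  have hξ := hasFDerivAt_capPoint (θ := θ) hZ
  have hν : HasFDerivAt (fun Z => sphNormal n θ (capPoint n θ Z)) _ Z := hξ.sub_const _
  have hgc := ((hg.differentiable two_ne_zero) (capPoint n θ Z)).hasFDerivAt.comp Z hξ
  have hG := (((contDiff_gradient hg (k := 1) (by norm_num)).differentiable one_ne_zero)
    (capPoint n θ Z)).hasFDerivAt.comp Z hξ
  have h := (hgc.smul hν).add (hG.sub ((hν.inner ℝ hG).smul hν))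
  have hfun : (fun Z => positionVec n θ g (capPoint n θ Z)) = _ :=
    funext fun Z => by rw [positionVec, sgrad, tproj_apply]
  rw [hfun]
  refine h.congr_fderiv (ContinuousLinearMap.ext fun W => ?_)
  simp only [radiiOp, thessOp, Function.comp_apply, ContinuousLinearMap.comp_apply, add_apply,
    sub_apply, smul_apply, ContinuousLinearMap.smulRight_apply, ContinuousLinearMap.prod_apply,
    fderivInnerCLM_apply, map_smul, smul_eq_mul, real_inner_smul_left, real_inner_smul_right,
    ← inner_gradient_left, tproj_apply _ (fderiv ℝ (gradient g) _ _)]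
  rw [real_inner_comm (gradient g _) (sphNormal n θ _),
    real_inner_comm (gradient g _) (tproj n θ _ W)]
  module

end SupportFunction

section CentralProjection

/-- The hyperplane orthogonal to `e`, which carries the central projection of the cap. -/
abbrev EquatorialPlane (n : ℕ) : Type := ↥(ℝ ∙ eVec n)ᗮ

/-- The point over `y` of the affine hyperplane `{Z | ⟪Z, e⟫ = -1}`. -/
def affinePoint {n : ℕ} (y : EquatorialPlane n) : Euc n := (y : Euc n) - eVec n

/-- The inverse of the central projection of the cap from the centre of its sphere onto the affine
hyperplane `{Z | ⟪Z, e⟫ = -1}`. -/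
def centralLift (n : ℕ) (θ : ℝ) (y : EquatorialPlane n) : Euc n := capPoint n θ (affinePoint y)

variable {n : ℕ} {θ : ℝ} {ξ : Euc n}

theorem inner_eVec_right (x : Euc n) : ⟪x, eVec n⟫ = -x (Fin.last n) := by
  simp [eVec, inner_neg_right, EuclideanSpace.inner_single_right]

theorem norm_eVec : ‖eVec n‖ = 1 := by
  simp [eVec]

theorem inner_coe_eVec (y : EquatorialPlane n) : ⟪(y : Euc n), eVec n⟫ = 0 :=
  Submodule.mem_orthogonal_singleton_iff_inner_left.1 y.2

theorem finrank_equatorialPlane : Module.finrank ℝ (EquatorialPlane n) = n := by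
  have : Fact (Module.finrank ℝ (Euc n) = n + 1) := ⟨by simp⟩
  exact Submodule.finrank_orthogonal_span_singleton (norm_ne_zero_iff.1 (by simp [norm_eVec]))

theorem inner_affinePoint_eVec (y : EquatorialPlane n) : ⟪affinePoint y, eVec n⟫ = -1 := by
  simp [affinePoint, inner_sub_left, inner_coe_eVec, norm_eVec]

theorem norm_affinePoint_sq (y : EquatorialPlane n) : ‖affinePoint y‖ ^ 2 = 1 + ‖y‖ ^ 2 := by
  rw [affinePoint, norm_sub_sq_real, inner_coe_eVec, norm_eVec, Submodule.norm_coe]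
  ring

theorem one_le_norm_affinePoint (y : EquatorialPlane n) : 1 ≤ ‖affinePoint y‖ := by
  rw [← one_le_sq_iff₀ (norm_nonneg _), norm_affinePoint_sq]
  simp

theorem affinePoint_ne_zero (y : EquatorialPlane n) : affinePoint y ≠ 0 :=
  norm_pos_iff.1 (zero_lt_one.trans_le (one_le_norm_affinePoint y))

theorem hasFDerivAt_affinePoint (y : EquatorialPlane n) :
    HasFDerivAt affinePoint (ℝ ∙ eVec n)ᗮ.subtypeL y :=
  ((ℝ ∙ eVec n)ᗮ.subtypeL.hasFDerivAt).sub_const _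

theorem contDiff_affinePoint {k : WithTop ℕ∞} : ContDiff ℝ k (affinePoint (n := n)) :=
  (ℝ ∙ eVec n)ᗮ.subtypeL.contDiff.sub contDiff_const

theorem sphNormal_centralLift (y : EquatorialPlane n) :
    sphNormal n θ (centralLift n θ y) = NormedSpace.normalize (affinePoint y) :=
  sphNormal_capPoint _

theorem norm_sphNormal_centralLift (y : EquatorialPlane n) :
    ‖sphNormal n θ (centralLift n θ y)‖ = 1 :=
  norm_sphNormal_capPoint (affinePoint_ne_zero y)

theorem norm_smul_sphNormal_centralLift (y : EquatorialPlane n) :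
    ‖affinePoint y‖ • sphNormal n θ (centralLift n θ y) = affinePoint y := by
  rw [sphNormal_centralLift, NormedSpace.norm_smul_normalize]

theorem inner_sphNormal_centralLift_eVec (y : EquatorialPlane n) :
    ⟪sphNormal n θ (centralLift n θ y), eVec n⟫ = -‖affinePoint y‖⁻¹ := by
  simp [sphNormal_centralLift, NormedSpace.normalize, real_inner_smul_left,
    inner_affinePoint_eVec]

theorem inner_sphNormal_eVec (ξ : Euc n) :
    ⟪sphNormal n θ ξ, eVec n⟫ = -(ξ (Fin.last n) + Real.cos θ) := by
  simp [sphNormal, inner_sub_left, real_inner_smul_left, inner_eVec_right ξ, norm_eVec]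
  ring

theorem centralLift_last (y : EquatorialPlane n) :
    centralLift n θ y (Fin.last n) = ‖affinePoint y‖⁻¹ - Real.cos θ := by
  have := inner_sphNormal_eVec (θ := θ) (centralLift n θ y)
  rw [inner_sphNormal_centralLift_eVec] at this
  linarith

theorem norm_affinePoint_le_inv_cos_iff (hc : 0 < Real.cos θ) (ht : 0 ≤ Real.tan θ)
    {y : EquatorialPlane n} : ‖affinePoint y‖ ≤ (Real.cos θ)⁻¹ ↔ ‖y‖ ≤ Real.tan θ := by
  rw [← sq_le_sq₀ (norm_nonneg _) (inv_pos.2 hc).le, norm_affinePoint_sq, inv_pow,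
    ← Real.inv_one_add_tan_sq hc.ne', inv_inv, add_le_add_iff_left, sq_le_sq₀ (norm_nonneg _) ht]

theorem norm_affinePoint_eq_inv_cos (hc : 0 < Real.cos θ) {y : EquatorialPlane n}
    (hy : ‖y‖ = Real.tan θ) : ‖affinePoint y‖ = (Real.cos θ)⁻¹ := by
  rw [← sq_eq_sq₀ (norm_nonneg _) (inv_pos.2 hc).le, norm_affinePoint_sq, inv_pow,
    ← Real.inv_one_add_tan_sq hc.ne', inv_inv, hy]

theorem centralLift_mem_cap_iff (hc : 0 < Real.cos θ) (ht : 0 ≤ Real.tan θ)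
    {y : EquatorialPlane n} : centralLift n θ y ∈ cap n θ ↔ ‖y‖ ≤ Real.tan θ := by
  rw [← norm_affinePoint_le_inv_cos_iff hc ht, cap, mem_ofPred_eq,
    and_iff_left (norm_sphNormal_centralLift y), centralLift_last, sub_nonneg,
    le_inv_comm₀ hc (norm_pos_iff.2 (affinePoint_ne_zero y))]

theorem centralLift_mem_capBdry (hc : 0 < Real.cos θ) {y : EquatorialPlane n}
    (hy : ‖y‖ = Real.tan θ) : centralLift n θ y ∈ capBdry n θ := by
  refine ⟨?_, norm_sphNormal_centralLift y⟩
  rw [centralLift_last, norm_affinePoint_eq_inv_cos hc hy, inv_inv, sub_self]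

theorem exists_centralLift_eq (hξ : ‖sphNormal n θ ξ‖ = 1)
    (hpos : ⟪sphNormal n θ ξ, eVec n⟫ < 0) :
    ∃ y : EquatorialPlane n, centralLift n θ y = ξ := by
  set t : ℝ := -⟪sphNormal n θ ξ, eVec n⟫ with ht
  have ht0 : 0 < t := neg_pos.2 hpos
  have hmem : t⁻¹ • sphNormal n θ ξ + eVec n ∈ (ℝ ∙ eVec n)ᗮ := by
    rw [Submodule.mem_orthogonal_singleton_iff_inner_left, inner_add_left, real_inner_smul_left,
      ← neg_neg ⟪sphNormal n θ ξ, eVec n⟫, ← ht, real_inner_self_eq_norm_sq, norm_eVec]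
    field_simp
    ring
  refine ⟨⟨_, hmem⟩, ?_⟩
  rw [centralLift, capPoint, affinePoint, add_sub_cancel_right,
    NormedSpace.normalize_smul_of_pos (inv_pos.2 ht0),
    NormedSpace.normalize_eq_self_of_norm_eq_one hξ,
    sphNormal, sub_add_cancel]

theorem exists_centralLift_eq_of_mem_cap (hc : 0 < Real.cos θ) (ht : 0 ≤ Real.tan θ)
    (hξ : ξ ∈ cap n θ) : ∃ y : EquatorialPlane n, ‖y‖ ≤ Real.tan θ ∧ centralLift n θ y = ξ := by
  obtain ⟨y, rfl⟩ := exists_centralLift_eq hξ.2 (by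
    rw [inner_sphNormal_eVec]
    linarith [hξ.1])
  exact ⟨y, (centralLift_mem_cap_iff hc ht).1 hξ, rfl⟩

end CentralProjection

section SliceSupport

/-- The restriction of the support function of `g` to the affine hyperplane `{Z | ⟪Z, e⟫ = -1}`,
as a function on the parallel hyperplane through the origin. Its Euclidean Hessian is `∇²g + gσ`
up to a conformal factor. -/
def sliceSupport (n : ℕ) (θ : ℝ) (g : Euc n → ℝ) (y : EquatorialPlane n) : ℝ :=
  supportExt n θ g (affinePoint y)

variable {n : ℕ} {θ : ℝ} {g : Euc n → ℝ} {ξ : Euc n} {y : EquatorialPlane n}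

theorem sliceSupport_eq (y : EquatorialPlane n) :
    sliceSupport n θ g y = ‖affinePoint y‖ * g (centralLift n θ y) :=
  rfl

theorem contDiff_norm_affinePoint {k : WithTop ℕ∞} :
    ContDiff ℝ k fun y : EquatorialPlane n => ‖affinePoint y‖ :=
  contDiff_affinePoint.norm ℝ affinePoint_ne_zero

theorem contDiff_sliceSupport {k : WithTop ℕ∞} (hg : ContDiff ℝ k g) :
    ContDiff ℝ k (sliceSupport n θ g) := by
  have hlift : ContDiff ℝ k (centralLift n θ) :=
    ((contDiff_norm_affinePoint.inv fun y => norm_ne_zero_iff.2 (affinePoint_ne_zero y)).smul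
      contDiff_affinePoint).add contDiff_const
  exact contDiff_norm_affinePoint.mul (hg.comp hlift)

theorem dirDeriv_sliceSupport (hg : Differentiable ℝ g) (e y : EquatorialPlane n) :
    dirDeriv e (sliceSupport n θ g) y = ⟪positionVec n θ g (centralLift n θ y), (e : Euc n)⟫ :=
  DFunLike.congr_fun ((hasFDerivAt_supportExt hg (affinePoint_ne_zero y)).comp y
    (hasFDerivAt_affinePoint y)).fderiv e

theorem dirDeriv_dirDeriv_sliceSupport (hg : ContDiff ℝ 2 g) (a e y : EquatorialPlane n) :
    dirDeriv a (dirDeriv e (sliceSupport n θ g)) y =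
      ‖affinePoint y‖⁻¹ * ⟪radiiOp n θ g (centralLift n θ y) a, (e : Euc n)⟫ := by
  have hfun : dirDeriv e (sliceSupport n θ g) =
      fun z => ⟪positionVec n θ g (centralLift n θ z), (e : Euc n)⟫ :=
    funext (dirDeriv_sliceSupport (hg.differentiable two_ne_zero) e)
  have hpos : HasFDerivAt (fun z => positionVec n θ g (centralLift n θ z))
      ((‖affinePoint y‖⁻¹ • radiiOp n θ g (centralLift n θ y)) ∘L (ℝ ∙ eVec n)ᗮ.subtypeL) y :=
    (hasFDerivAt_positionVec_capPoint hg (affinePoint_ne_zero y)).comp y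
      (hasFDerivAt_affinePoint y)
  rw [hfun, dirDeriv, (hpos.inner ℝ (hasFDerivAt_const (e : Euc n) y)).fderiv]
  simp [real_inner_smul_left]

theorem legendre_sliceSupport (hg : Differentiable ℝ g) (y : EquatorialPlane n) :
    legendre (sliceSupport n θ g) y =
      ⟪positionVec n θ g (centralLift n θ y), eVec n⟫ := by
  have hcoe : (y : Euc n) =
      ‖affinePoint y‖ • sphNormal n θ (centralLift n θ y) + eVec n := by
    rw [norm_smul_sphNormal_centralLift, affinePoint, sub_add_cancel]
  rw [legendre, dirDeriv_sliceSupport hg, hcoe, inner_add_right, real_inner_smul_right,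
    inner_positionVec_sphNormal (norm_sphNormal_centralLift y), sliceSupport_eq]
  ring

theorem positionSq_sliceSupport (hg : Differentiable ℝ g) (y : EquatorialPlane n) :
    positionSq (sliceSupport n θ g) y =
      g (centralLift n θ y) ^ 2 + ‖sgrad n θ g (centralLift n θ y)‖ ^ 2 := by
  rw [positionSq, gradSq, legendre_sliceSupport hg,
    norm_fderiv_sq_eq_sum (stdOrthonormalBasis ℝ (EquatorialPlane n))]
  simp only [dirDeriv_sliceSupport hg]
  rw [sum_inner_sq_add_inner_sq norm_eVec, norm_positionVec_sq (norm_sphNormal_centralLift y)]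

theorem tproj_centralLift_ne_zero {a : EquatorialPlane n} (ha : a ≠ 0) :
    tproj n θ (centralLift n θ y) a ≠ 0 := by
  intro h0
  rw [tproj_apply] at h0
  have he := congrArg (⟪·, eVec n⟫) h0
  have hν : ⟪sphNormal n θ (centralLift n θ y), (a : Euc n)⟫ = 0 := by
    simpa [inner_sub_left, real_inner_smul_left, inner_coe_eVec, inner_sphNormal_centralLift_eVec,
      affinePoint_ne_zero] using he
  exact ha (by simpa [hν] using h0)

theorem dirDeriv_dirDeriv_sliceSupport_pos (hg : ContDiff ℝ 2 g) (hconv : IsConvexSol n θ g)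
    (hy : centralLift n θ y ∈ cap n θ) {a : EquatorialPlane n} (ha : a ≠ 0) :
    0 < dirDeriv a (dirDeriv a (sliceSupport n θ g)) y := by
  rw [dirDeriv_dirDeriv_sliceSupport hg, inner_radiiOp (norm_sphNormal_centralLift y)]
  exact mul_pos (inv_pos.2 (norm_pos_iff.2 (affinePoint_ne_zero y)))
    (hconv _ hy _ (isTangent_tproj hy.2 _) (tproj_centralLift_ne_zero ha))

theorem dirDeriv_dirDeriv_sliceSupport_nonneg (hg : ContDiff ℝ 2 g) (hconv : IsConvexSol n θ g)
    (hy : centralLift n θ y ∈ cap n θ) (a : EquatorialPlane n) :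
    0 ≤ dirDeriv a (dirDeriv a (sliceSupport n θ g)) y := by
  rcases eq_or_ne a 0 with rfl | ha
  · simp [dirDeriv_dirDeriv_sliceSupport hg]
  · exact (dirDeriv_dirDeriv_sliceSupport_pos hg hconv hy ha).le

theorem det_dirDeriv_sliceSupport (hg : ContDiff ℝ 2 g)
    (b : OrthonormalBasis (Fin n) ℝ (EquatorialPlane n)) (y : EquatorialPlane n) :
    (Matrix.of fun i j => dirDeriv (b i) (dirDeriv (b j) (sliceSupport n θ g)) y).det =
      ‖affinePoint y‖⁻¹ ^ (n + 2) * sdet n θ g (centralLift n θ y) := by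
  have hν := norm_sphNormal_centralLift (θ := θ) y
  have hmat : (Matrix.of fun i j => dirDeriv (b i) (dirDeriv (b j) (sliceSupport n θ g)) y) =
      ‖affinePoint y‖⁻¹ • (Matrix.of fun i j =>
        ⟪(b i : Euc n), radiiOp n θ g (centralLift n θ y) (b j)⟫).transpose := by
    ext i j
    simp [dirDeriv_dirDeriv_sliceSupport hg, real_inner_comm]
  rw [hmat, Matrix.det_smul, Matrix.det_transpose, Fintype.card_fin,
    det_inner_orthogonal_singleton hν norm_eVec b (radiiOp_sphNormal hν)
      (inner_sphNormal_radiiOp hν), ← hessOp_eq_radiiOp_add, ← sdet,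
    inner_sphNormal_centralLift_eVec]
  ring

theorem inner_positionVec_eVec_of_robin (hs : Real.sin θ ≠ 0) (hξ : ξ ∈ capBdry n θ)
    (hrobin : ⟪sgrad n θ g ξ, conormal n θ ξ⟫ = Real.cot θ * g ξ) :
    ⟪positionVec n θ g ξ, eVec n⟫ = 0 := by
  have hgrad : ⟪sgrad n θ g ξ, sphNormal n θ ξ⟫ = 0 := isTangent_tproj hξ.2 _
  rw [sphNormal, inner_sub_right, real_inner_smul_right, sub_eq_zero] at hgrad
  rw [conormal, inner_add_right, real_inner_smul_right, real_inner_smul_right, hgrad,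
    Real.cot_eq_cos_div_sin] at hrobin
  field_simp at hrobin
  rw [positionVec, inner_add_left, real_inner_smul_left, inner_sphNormal_eVec, hξ.1]
  linear_combination hrobin - ⟪sgrad n θ g ξ, eVec n⟫ * Real.sin_sq_add_cos_sq θ

theorem dirDeriv_self_sliceSupport_of_robin (hg : Differentiable ℝ g) (hc : 0 < Real.cos θ)
    (hs : Real.sin θ ≠ 0) (hrobin : RobinBC n θ g) (hy : ‖y‖ = Real.tan θ) :
    dirDeriv y (sliceSupport n θ g) y = sliceSupport n θ g y := by
  have hξ := centralLift_mem_capBdry hc hy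
  rw [← sub_eq_zero, ← legendre, legendre_sliceSupport hg,
    inner_positionVec_eVec_of_robin hs hξ (hrobin _ hξ)]

end SliceSupport

section CapillaryEquation

/-- The conformal weight `|Z|^{-(n+2+p)}` on the affine hyperplane which, in the equation satisfied
by the slice of the support function of `h`, multiplies the slice of `f`. -/
def sliceWeight (n : ℕ) (p : ℝ) (y : EquatorialPlane n) : ℝ :=
  ‖affinePoint y‖ ^ (-((n : ℝ) + 2 + p))

variable {n : ℕ} {θ p q m K : ℝ} {f g h : Euc n → ℝ} {y : EquatorialPlane n}

theorem sliceWeight_pos (p : ℝ) (y : EquatorialPlane n) : 0 < sliceWeight n p y :=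
  Real.rpow_pos_of_pos (norm_pos_iff.2 (affinePoint_ne_zero y)) _

theorem contDiff_sliceWeight {k : WithTop ℕ∞} (n : ℕ) (p : ℝ) : ContDiff ℝ k (sliceWeight n p) :=
  contDiff_norm_affinePoint.rpow_const_of_ne fun y => norm_ne_zero_iff.2 (affinePoint_ne_zero y)

theorem inv_norm_affinePoint_pow_eq (p : ℝ) (y : EquatorialPlane n) :
    ‖affinePoint y‖⁻¹ ^ (n + 2) =
      ‖affinePoint y‖ * sliceWeight n p y * ‖affinePoint y‖ ^ (p - 1) := by
  have hpos := norm_pos_iff.2 (affinePoint_ne_zero y)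
  rw [mul_assoc, mul_comm, sliceWeight, ← Real.rpow_add hpos, ← Real.rpow_add_one hpos.ne', inv_pow,
    ← Real.rpow_natCast, ← Real.rpow_neg hpos.le]
  congr 1
  push_cast
  ring

theorem SolvesEq.det_dirDeriv_sliceSupport_eq (hsol : SolvesEq n θ p q f h) (hh : ContDiff ℝ 2 h)
    (hy : centralLift n θ y ∈ cap n θ) (hpos : 0 ≤ h (centralLift n θ y))
    (b : OrthonormalBasis (Fin n) ℝ (EquatorialPlane n)) :
    (Matrix.of fun i j => dirDeriv (b i) (dirDeriv (b j) (sliceSupport n θ h)) y).det =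
      sliceSupport n θ f y * sliceWeight n p y * sliceSupport n θ h y ^ (p - 1)
        * positionSq (sliceSupport n θ h) y ^ (((n : ℝ) + 1 - q) / 2) := by
  rw [det_dirDeriv_sliceSupport hh, hsol _ hy, eqRHS,
    positionSq_sliceSupport (hh.differentiable two_ne_zero), sliceSupport_eq, sliceSupport_eq,
    Real.mul_rpow (norm_nonneg _) hpos, inv_norm_affinePoint_pow_eq p]
  ring

theorem le_sliceSupport (hm : 0 ≤ m) (hg : m ≤ g (centralLift n θ y)) :
    m ≤ sliceSupport n θ g y :=
  hg.trans (le_mul_of_one_le_left (hm.trans hg) (one_le_norm_affinePoint y))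

theorem norm_sliceSupport_le (hc : 0 < Real.cos θ) (ht : 0 ≤ Real.tan θ)
    (hg : CZeroNormLe n θ g K) (hy : ‖y‖ ≤ Real.tan θ) :
    ‖sliceSupport n θ g y‖ ≤ (Real.cos θ)⁻¹ * K :=
  norm_mul_le_of_le
    ((norm_norm _).trans_le ((norm_affinePoint_le_inv_cos_iff hc ht).2 hy))
    (hg _ ((centralLift_mem_cap_iff hc ht).2 hy))

theorem norm_dirDeriv_sliceSupport_le (hg : Differentiable ℝ g) (hgK : COneNormLe n θ g K)
    (hy : centralLift n θ y ∈ cap n θ) {e : EquatorialPlane n} (he : ‖e‖ = 1) :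
    ‖dirDeriv e (sliceSupport n θ g) y‖ ≤ 2 * K := by
  have hpos : ‖positionVec n θ g (centralLift n θ y)‖ ≤ 2 * K := by
    calc ‖positionVec n θ g (centralLift n θ y)‖
        ≤ ‖g (centralLift n θ y) • sphNormal n θ (centralLift n θ y)‖
          + ‖sgrad n θ g (centralLift n θ y)‖ := norm_add_le _ _
      _ ≤ K + K := by
          rw [norm_smul, hy.2, mul_one]
          exact add_le_add (hgK.1 _ hy) (hgK.2 _ hy)
      _ = 2 * K := (two_mul K).symm
  rw [dirDeriv_sliceSupport hg]
  exact (norm_inner_le_norm _ _).trans (by rwa [Submodule.norm_coe, he, mul_one])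

theorem norm_dirDeriv_dirDeriv_sliceSupport_le (hg : ContDiff ℝ 2 g) (hgK : CTwoNormLe n θ g K)
    (hy : centralLift n θ y ∈ cap n θ) {e : EquatorialPlane n} (he : ‖e‖ = 1) :
    ‖dirDeriv e (dirDeriv e (sliceSupport n θ g)) y‖ ≤ 2 * K := by
  have hK : 0 ≤ K := (abs_nonneg _).trans (hgK.1.1 _ hy)
  set P := tproj n θ (centralLift n θ y) e
  have htan : IsTangent n θ (centralLift n θ y) P := isTangent_tproj hy.2 _
  have hP : ‖P‖ ≤ 1 := (norm_tproj_le hy.2 _).trans_eq he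
  have hPP : ‖P‖ * ‖P‖ ≤ 1 := mul_le_one₀ hP (norm_nonneg _) hP
  have hhess : ‖shess n θ g (centralLift n θ y) P P‖ ≤ K :=
    (hgK.2 _ hy _ _ htan htan).trans (by
      rw [mul_assoc]
      exact mul_le_of_le_one_right hK hPP)
  have hzero : ‖g (centralLift n θ y) * ⟪P, P⟫‖ ≤ K * 1 :=
    norm_mul_le_of_le (hgK.1.1 _ hy) ((norm_inner_le_norm _ _).trans hPP)
  have hinv : ‖‖affinePoint y‖⁻¹‖ ≤ 1 := by
    rw [norm_inv, norm_norm]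
    exact inv_le_one_of_one_le₀ (one_le_norm_affinePoint y)
  rw [dirDeriv_dirDeriv_sliceSupport hg, inner_radiiOp hy.2]
  refine (norm_mul_le_of_le hinv (norm_add_le_of_le hhess hzero)).trans_eq ?_
  ring

theorem CTwoNormLe.cTwoBound_sliceSupport (hgK : CTwoNormLe n θ g K) (hc : 0 < Real.cos θ)
    (ht : 0 ≤ Real.tan θ) (hg : ContDiff ℝ 2 g) :
    CTwoBound (Real.tan θ) ((Real.cos θ)⁻¹ * K + 2 * K) (sliceSupport n θ g) := by
  have hcap {y : EquatorialPlane n} (hy : ‖y‖ ≤ Real.tan θ) :=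
    (centralLift_mem_cap_iff hc ht).2 hy
  have hzero {y : EquatorialPlane n} (hy : ‖y‖ ≤ Real.tan θ) :=
    norm_sliceSupport_le hc ht hgK.1.1 hy
  have hC {y : EquatorialPlane n} (hy : ‖y‖ ≤ Real.tan θ) : 0 ≤ (Real.cos θ)⁻¹ * K :=
    (norm_nonneg _).trans (hzero hy)
  have hK {y : EquatorialPlane n} (hy : ‖y‖ ≤ Real.tan θ) : 0 ≤ K :=
    (abs_nonneg _).trans (hgK.1.1 _ (hcap hy))
  exact
    { norm_le y hy := (hzero hy).trans (by linarith [hK hy])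
      norm_dirDeriv_le y hy e he :=
        (norm_dirDeriv_sliceSupport_le (hg.differentiable two_ne_zero) hgK.1 (hcap hy) he).trans
          (by linarith [hC hy])
      norm_dirDeriv_dirDeriv_le y hy e he :=
        (norm_dirDeriv_dirDeriv_sliceSupport_le hg hgK (hcap hy) he).trans
          (by linarith [hC hy]) }

theorem sin_ne_zero_of_tan_ne_zero (ht : Real.tan θ ≠ 0) : Real.sin θ ≠ 0 :=
  fun hs => ht (by rw [Real.tan_eq_sin_div_cos, hs, zero_div])

theorem robinMongeAmpere_sliceSupport (hc : 0 < Real.cos θ) (ht : 0 < Real.tan θ)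
    (hf : ContDiff ℝ ∞ f) (hfpos : PosOnCap n θ f) (hh : ContDiff ℝ ∞ h) (hhpos : PosOnCap n θ h)
    (hconv : IsConvexSol n θ h) (hsol : SolvesEq n θ p q f h) (hrobin : RobinBC n θ h) :
    RobinMongeAmpere n (Real.tan θ) (p - 1) (((n : ℝ) + 1 - q) / 2) (sliceSupport n θ h)
      fun y => sliceSupport n θ f y * sliceWeight n p y := by
  have hcap (y : EquatorialPlane n) (hy : ‖y‖ ≤ Real.tan θ) :=
    (centralLift_mem_cap_iff hc ht.le).2 hy
  have hpos {g : Euc n → ℝ} (hg : PosOnCap n θ g) (y : EquatorialPlane n)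
      (hy : ‖y‖ ≤ Real.tan θ) : 0 < sliceSupport n θ g y :=
    (hg _ (hcap y hy)).trans_le (le_sliceSupport (hg _ (hcap y hy)).le le_rfl)
  have hsource (y : EquatorialPlane n) (hy : ‖y‖ ≤ Real.tan θ) :
      0 < sliceSupport n θ f y * sliceWeight n p y :=
    mul_pos (hpos hfpos y hy) (sliceWeight_pos p y)
  have hdiff : Differentiable ℝ h := hh.differentiable (by simp)
  have hpsq (y : EquatorialPlane n) (hy : ‖y‖ ≤ Real.tan θ) :
      0 < positionSq (sliceSupport n θ h) y := by
    have := hhpos _ (hcap y hy)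
    rw [positionSq_sliceSupport hdiff]
    positivity
  have h2 : ContDiff ℝ 2 h := contDiff_infty.1 hh 2
  exact
    { radius_pos := ht
      contDiff := contDiff_sliceSupport hh
      contDiff_source := (contDiff_sliceSupport hf).mul (contDiff_sliceWeight n p)
      pos := hpos hhpos
      source_pos := hsource
      positionSq_pos := hpsq
      hessian_pos y hy _ he := dirDeriv_dirDeriv_sliceSupport_pos h2 hconv (hcap y hy) he
      robin _ hy := dirDeriv_self_sliceSupport_of_robin hdiff hc
        (sin_ne_zero_of_tan_ne_zero ht.ne') hrobin hy
      log_det_eq y hy b := by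
        have hv := hpos hhpos y hy
        have hρ := hpsq y hy
        rw [hsol.det_dirDeriv_sliceSupport_eq h2 (hcap y hy) (hhpos _ (hcap y hy)).le,
          Real.log_mul (mul_pos (hsource y hy) (Real.rpow_pos_of_pos hv _)).ne'
            (Real.rpow_pos_of_pos hρ _).ne',
          Real.log_mul (hsource y hy).ne' (Real.rpow_pos_of_pos hv _).ne', Real.log_rpow hv,
          Real.log_rpow hρ] }

theorem norm_fderiv_sliceSupport_le (hc : 0 < Real.cos θ) (ht : 0 < Real.tan θ)
    (hg : ContDiff ℝ ∞ g) (hK : CZeroNormLe n θ g K) (hconv : IsConvexSol n θ g)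
    (hrobin : RobinBC n θ g) (hy : ‖y‖ ≤ Real.tan θ) :
    ‖fderiv ℝ (sliceSupport n θ g) y‖ ≤ (Real.cos θ)⁻¹ * K / Real.tan θ := by
  have hnorm (z : EquatorialPlane n) (hz : ‖z‖ ≤ Real.tan θ) :=
    norm_sliceSupport_le hc ht.le hK hz
  exact norm_fderiv_le_div_of_robin ht (contDiff_sliceSupport hg)
    (fun z hz => dirDeriv_dirDeriv_sliceSupport_nonneg (contDiff_infty.1 hg 2) hconv
      ((centralLift_mem_cap_iff hc ht.le).2 hz))
    (fun z hz => dirDeriv_self_sliceSupport_of_robin (hg.differentiable (by simp)) hc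
      (sin_ne_zero_of_tan_ne_zero ht.ne') hrobin hz)
    ((norm_nonneg _).trans (hnorm y hy)) (fun z hz => (le_abs_self _).trans (hnorm z hz)) hy

theorem norm_inv_le_of_le {x r : ℝ} (hr : 0 < r) (hx : r ≤ x) : ‖x⁻¹‖ ≤ r⁻¹ := by
  rw [norm_inv, Real.norm_of_nonneg (hr.le.trans hx)]
  exact inv_anti₀ hr hx

theorem exists_aprioriBounds_sliceSupport (n : ℕ) (p : ℝ) (hc : 0 < Real.cos θ)
    (ht : 0 < Real.tan θ) {m₁ m₂ : ℝ} (K₁ K₂ : ℝ) (hm₁ : 0 < m₁) (hm₂ : 0 < m₂) :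
    ∃ N, ∀ {f h : Euc n → ℝ}, ContDiff ℝ ∞ f → (∀ ξ ∈ cap n θ, m₁ ≤ f ξ) →
      CTwoNormLe n θ f K₁ → ContDiff ℝ ∞ h → (∀ ξ ∈ cap n θ, m₂ ≤ h ξ) → CZeroNormLe n θ h K₂ →
      IsConvexSol n θ h → RobinBC n θ h →
      AprioriBounds (Real.tan θ) N (sliceSupport n θ h)
        fun y => sliceSupport n θ f y * sliceWeight n p y := by
  obtain ⟨W, hW⟩ := exists_cTwoBound (contDiff_sliceWeight n p) (Real.tan θ)
  obtain ⟨W', hW'⟩ := exists_norm_le_of_continuous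
    ((contDiff_sliceWeight (k := 0) n p).continuous.inv₀ fun y => (sliceWeight_pos p y).ne')
    (Real.tan θ)
  obtain ⟨N, hN⟩ := (toFinite {(Real.cos θ)⁻¹ * K₂, m₂⁻¹, (Real.cos θ)⁻¹ * K₂ / Real.tan θ,
    (m₂ ^ 2)⁻¹, 4 * (((Real.cos θ)⁻¹ * K₁ + 2 * K₁) * W), m₁⁻¹ * W'}).bddAbove
  refine ⟨N, fun {f h} hf hfm hfK hh hhm hhK hconv hrobin => ?_⟩
  have hcap (y : EquatorialPlane n) (hy : ‖y‖ ≤ Real.tan θ) :=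
    (centralLift_mem_cap_iff hc ht.le).2 hy
  exact
    { norm_le y hy := (norm_sliceSupport_le hc ht.le hhK hy).trans (hN (by simp))
      norm_inv_le y hy :=
        (norm_inv_le_of_le hm₂ (le_sliceSupport hm₂.le (hhm _ (hcap y hy)))).trans (hN (by simp))
      norm_fderiv_le y hy :=
        (norm_fderiv_sliceSupport_le hc ht hh hhK hconv hrobin hy).trans (hN (by simp))
      norm_inv_positionSq_le y hy := by
        refine (norm_inv_le_of_le (pow_pos hm₂ 2) ?_).trans (hN (by simp))
        rw [positionSq_sliceSupport (hh.differentiable (by simp))]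
        exact (pow_le_pow_left₀ hm₂.le (hhm _ (hcap y hy)) 2).trans
          (le_add_of_nonneg_right (sq_nonneg _))
      source_bound :=
        ((hfK.cTwoBound_sliceSupport hc ht.le (contDiff_infty.1 hf 2)).mul hW
          (contDiff_sliceSupport hf) (contDiff_sliceWeight n p)).mono (hN (by simp))
      norm_inv_source_le y hy := by
        rw [mul_inv]
        exact (norm_mul_le_of_le
          (norm_inv_le_of_le hm₁ (le_sliceSupport hm₁.le (hfm _ (hcap y hy)))) (hW' y hy)).trans
          (hN (by simp)) }

theorem exists_tproj_centralLift_eq {X : Euc n} (hX : IsTangent n θ (centralLift n θ y) X) :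
    ∃ a : EquatorialPlane n,
      tproj n θ (centralLift n θ y) a = X ∧ ‖a‖ ≤ (1 + ‖affinePoint y‖) * ‖X‖ := by
  have hmem : X + ⟪X, eVec n⟫ • affinePoint y ∈ (ℝ ∙ eVec n)ᗮ := by
    rw [Submodule.mem_orthogonal_singleton_iff_inner_left, inner_add_left, real_inner_smul_left,
      inner_affinePoint_eVec]
    ring
  refine ⟨⟨_, hmem⟩, ?_, ?_⟩
  · rw [map_add, map_smul, ← norm_smul_sphNormal_centralLift (θ := θ), map_smul,
      tproj_sphNormal (norm_sphNormal_centralLift y), hX.tproj_eq, smul_zero, smul_zero, add_zero]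
  · have he : ‖⟪X, eVec n⟫‖ ≤ ‖X‖ := by
      simpa [norm_eVec] using norm_inner_le_norm (𝕜 := ℝ) X (eVec n)
    calc ‖X + ⟪X, eVec n⟫ • affinePoint y‖
        ≤ ‖X‖ + ‖⟪X, eVec n⟫‖ * ‖affinePoint y‖ := by
          rw [← norm_smul]
          exact norm_add_le _ _
      _ ≤ ‖X‖ + ‖X‖ * ‖affinePoint y‖ := by gcongr
      _ = (1 + ‖affinePoint y‖) * ‖X‖ := by ring

theorem shess_tproj_centralLift (hg : ContDiff ℝ 2 g) (a b : EquatorialPlane n) :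
    shess n θ g (centralLift n θ y) (tproj n θ (centralLift n θ y) a)
        (tproj n θ (centralLift n θ y) b) =
      ‖affinePoint y‖ * dirDeriv a (dirDeriv b (sliceSupport n θ g)) y
        - g (centralLift n θ y)
          * ⟪tproj n θ (centralLift n θ y) a, tproj n θ (centralLift n θ y) b⟫ := by
  rw [dirDeriv_dirDeriv_sliceSupport hg, mul_inv_cancel_left₀
    (norm_ne_zero_iff.2 (affinePoint_ne_zero y)), inner_radiiOp (norm_sphNormal_centralLift y),
    add_sub_cancel_right]

theorem abs_shess_le_of_dirDeriv_dirDeriv_le {D : ℝ} (hD : 0 ≤ D) (hc : 0 < Real.cos θ)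
    (ht : 0 ≤ Real.tan θ) (hg : ContDiff ℝ 2 g) (hK : CZeroNormLe n θ g K)
    (hconv : IsConvexSol n θ g)
    (hle : ∀ (y e : EquatorialPlane n), ‖y‖ ≤ Real.tan θ → ‖e‖ = 1 →
      dirDeriv e (dirDeriv e (sliceSupport n θ g)) y ≤ D)
    {ξ X Y : Euc n} (hξ : ξ ∈ cap n θ) (hX : IsTangent n θ ξ X) (hY : IsTangent n θ ξ Y) :
    |shess n θ g ξ X Y| ≤
      ((Real.cos θ)⁻¹ * D * (1 + (Real.cos θ)⁻¹) ^ 2 + K) * ‖X‖ * ‖Y‖ := by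
  obtain ⟨y, hy, rfl⟩ := exists_centralLift_eq_of_mem_cap hc ht hξ
  have hs : ‖affinePoint y‖ ≤ (Real.cos θ)⁻¹ := (norm_affinePoint_le_inv_cos_iff hc ht).2 hy
  obtain ⟨a, rfl, ha⟩ := exists_tproj_centralLift_eq hX
  obtain ⟨b, rfl, hb⟩ := exists_tproj_centralLift_eq hY
  have hab : ‖dirDeriv a (dirDeriv b (sliceSupport n θ g)) y‖ ≤ D * ‖a‖ * ‖b‖ :=
    abs_dirDeriv_dirDeriv_le hD (contDiff_sliceSupport hg)
      (dirDeriv_dirDeriv_sliceSupport_nonneg hg hconv hξ) (fun e he => hle y e hy he) a b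
  set X := tproj n θ (centralLift n θ y) a
  set Y := tproj n θ (centralLift n θ y) b
  set S := (Real.cos θ)⁻¹
  have hslice : ‖‖affinePoint y‖ * dirDeriv a (dirDeriv b (sliceSupport n θ g)) y‖
      ≤ S * (D * ((1 + S) * ‖X‖) * ((1 + S) * ‖Y‖)) :=
    norm_mul_le_of_le ((norm_norm _).trans_le hs) (hab.trans (by
      gcongr
      · exact ha.trans (by gcongr)
      · exact hb.trans (by gcongr)))
  rw [shess_tproj_centralLift hg]
  refine (norm_sub_le_of_le hslice
    (norm_mul_le_of_le (hK _ hξ) (norm_inner_le_norm X Y))).trans_eq ?_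
  ring

theorem C2_estimate_general (n : ℕ) (θ p q : ℝ) (hθ : θ ∈ Set.Ioo 0 (π / 2))
    (m₁ m₂ K₁ K₂ : ℝ) (hm₁ : 0 < m₁) (hm₂ : 0 < m₂) :
    ∃ C : ℝ, 0 < C ∧
      ∀ f h : Euc n → ℝ,
        ContDiff ℝ ∞ f → (∀ ξ ∈ cap n θ, m₁ ≤ f ξ) → CTwoNormLe n θ f K₁ →
        ContDiff ℝ ∞ h → (∀ ξ ∈ cap n θ, m₂ ≤ h ξ) → CZeroNormLe n θ h K₂ →
        IsConvexSol n θ h → SolvesEq n θ p q f h → RobinBC n θ h →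
        ∀ ξ ∈ cap n θ, ∀ X Y : Euc n, IsTangent n θ ξ X → IsTangent n θ ξ Y →
          |shess n θ h ξ X Y| ≤ C * ‖X‖ * ‖Y‖ := by
  have hc : 0 < Real.cos θ := Real.cos_pos_of_mem_Ioo ⟨by linarith [hθ.1, Real.pi_pos], hθ.2⟩
  have ht : 0 < Real.tan θ := Real.tan_pos_of_pos_of_lt_pi_div_two hθ.1 hθ.2
  obtain ⟨N, hN⟩ := exists_aprioriBounds_sliceSupport n p hc ht K₁ K₂ hm₁ hm₂
  obtain ⟨D, hD⟩ := RobinMongeAmpere.exists_hessian_bound (E := EquatorialPlane n)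
    finrank_equatorialPlane (Real.tan θ) N (p - 1) (((n : ℝ) + 1 - q) / 2)
  refine ⟨(Real.cos θ)⁻¹ * |D| * (1 + (Real.cos θ)⁻¹) ^ 2 + |K₂| + 1, by positivity,
    fun f h hf hfm hfK hh hhm hhK hconv hsol hrobin ξ hξ X Y hX hY => ?_⟩
  have hRMA := robinMongeAmpere_sliceSupport hc ht hf (fun ξ hξ => hm₁.trans_le (hfm ξ hξ)) hh
    (fun ξ hξ => hm₂.trans_le (hhm ξ hξ)) hconv hsol hrobin
  refine (abs_shess_le_of_dirDeriv_dirDeriv_le (abs_nonneg D) hc ht.le (contDiff_infty.1 hh 2) hhK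
    hconv (fun y e hy he => (hD hRMA (hN hf hfm hfK hh hhm hhK hconv hrobin) y e hy he).trans
      (le_abs_self D)) hξ hX hY).trans ?_
  gcongr ?_ * _ * _
  linarith [le_abs_self K₂]

end CapillaryEquation

/-- Lemma 4.1, `C²` estimate: for `p > q` and `θ ∈ (0, π/2)` there is a
constant `C` depending only on `n`, `p`, `q`, a positive lower bound `m₁` for `f`, a
positive lower bound `m₂` for `h`, a `C²` bound `K₁` for `f` and a `C⁰` bound `K₂` for `h`,
such that any positive convex solution satisfies `max_{C_θ} |∇²h| ≤ C`. -/
theorem C2_estimate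
    (n : ℕ) (hn : 1 ≤ n) (θ p q : ℝ) (hθ : θ ∈ Set.Ioo 0 (π / 2)) (hpq : q < p)
    (m₁ m₂ K₁ K₂ : ℝ) (hm₁ : 0 < m₁) (hm₂ : 0 < m₂) :
    ∃ C : ℝ, 0 < C ∧
      ∀ f h : Euc n → ℝ,
        ContDiff ℝ (⊤ : ℕ∞) f → (∀ ξ ∈ cap n θ, 0 < f ξ) →
        (∀ ξ ∈ cap n θ, m₁ ≤ f ξ) → CTwoNormLe n θ f K₁ →
        ContDiff ℝ (⊤ : ℕ∞) h → PosOnCap n θ h →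
        (∀ ξ ∈ cap n θ, m₂ ≤ h ξ) → CZeroNormLe n θ h K₂ →
        IsConvexSol n θ h → SolvesEq n θ p q f h → RobinBC n θ h →
        ∀ ξ ∈ cap n θ, ∀ X Y : Euc n, IsTangent n θ ξ X → IsTangent n θ ξ Y →
          |shess n θ h ξ X Y| ≤ C * ‖X‖ * ‖Y‖ := by
  obtain ⟨C, hC, H⟩ := C2_estimate_general n θ p q hθ m₁ m₂ K₁ K₂ hm₁ hm₂
  exact ⟨C, hC, fun f h hf _ hfm hfK hh _ => H f h hf hfm hfK hh⟩
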